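/- Let N ≥ 1, let Ω ⊂ ℝ^N be a bounded open set with smooth boundary, let 1 < p ≤ θ, and let λ* > 0, σ > 0. Suppose that for each λ ∈ (λ*/2, λ*) there is a pair (u_λ, v_λ) of functions in C²(Ω) ∩ C(closure Ω), positive in Ω and vanishing on ∂Ω, satisfying −Δu_λ = λ(v_λ+1)^p and −Δv_λ = σλ(u_λ+1)^θ in Ω, which is stable, and such that for each x ∈ Ω the maps λ ↦ u_λ(x) and λ ↦ v_λ(x) are nondecreasing. Let x₀ be the largest root of the polynomial H, i.e. H(x₀) = 0 and H(x) ≠ 0 for all x > x₀. If N < 2 + 2x₀, then sup over λ ∈ (λ*/2, λ*) and x ∈ Ω of (u_λ(x) + v_λ(x)) is finite; in particular the extremal solution u*(x) = lim_{λ↗λ*} u_λ(x), v*(x) = lim_{λ↗λ*} v_λ(x) is bounded. -/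

import Mathlib

open MeasureTheory Metric Real Set

noncomputable section

/-- The Euclidean Laplacian `Δw(x) = ∑ i, ∂²w/∂xᵢ²(x)` on `ℝ^N`. -/
def lap {N : ℕ} (w : EuclideanSpace ℝ (Fin N) → ℝ) (x : EuclideanSpace ℝ (Fin N)) : ℝ :=
  ∑ i : Fin N,
    fderiv ℝ (fun y => fderiv ℝ w y (EuclideanSpace.single i 1)) x (EuclideanSpace.single i 1)

/-- `φ` is a smooth compactly supported test function with support inside `Ω`. -/
def IsTestFun {N : ℕ} (Ω : Set (EuclideanSpace ℝ (Fin N)))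
    (φ : EuclideanSpace ℝ (Fin N) → ℝ) : Prop :=
  ContDiff ℝ (⊤ : ℕ∞) φ ∧ HasCompactSupport φ ∧ tsupport φ ⊆ Ω

/-- Stability of a classical solution of `-Δu = λ(v+1)^p, -Δv = γ(u+1)^θ` in `Ω`:
`√(λγpθ) ∫_Ω (v+1)^((p-1)/2) (u+1)^((θ-1)/2) φ² ≤ ∫_Ω |∇φ|²` for all test functions. -/
def IsStable {N : ℕ} (Ω : Set (EuclideanSpace ℝ (Fin N))) (lam gam p θ : ℝ)
    (u v : EuclideanSpace ℝ (Fin N) → ℝ) : Prop :=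
  ∀ φ : EuclideanSpace ℝ (Fin N) → ℝ, IsTestFun Ω φ →
    Real.sqrt (lam * gam * p * θ) *
        ∫ x in Ω, (v x + 1) ^ ((p - 1) / 2) * (u x + 1) ^ ((θ - 1) / 2) * φ x ^ 2
      ≤ ∫ x in Ω, ‖gradient φ x‖ ^ 2

/-- `Ω` has smooth boundary: near each boundary point, `Ω` is the sublevel set of a
smooth defining function with nonvanishing differential. -/
def HasSmoothBoundary {N : ℕ} (Ω : Set (EuclideanSpace ℝ (Fin N))) : Prop :=
  ∀ x ∈ frontier Ω, ∃ (U : Set (EuclideanSpace ℝ (Fin N)))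
    (f : EuclideanSpace ℝ (Fin N) → ℝ), IsOpen U ∧ x ∈ U ∧ ContDiff ℝ (⊤ : ℕ∞) f ∧
    (∀ y ∈ U, fderiv ℝ f y ≠ 0) ∧ (∀ y ∈ U, y ∈ Ω ↔ f y < 0)

/-- The quartic polynomial `L`. -/
def Lpoly (p θ s : ℝ) : ℝ :=
  s ^ 4 - (16 * p * θ * (p + 1) / (θ + 1)) * s ^ 2
    + (16 * p * θ * (p + 1) * (p + θ + 2) / (θ + 1) ^ 2) * s
    - 16 * p * θ * (p + 1) ^ 2 / (θ + 1) ^ 2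

/-- The quartic polynomial `H`. -/
def Hpoly (p θ x : ℝ) : ℝ :=
  x ^ 4 - (16 * p * θ * (p + 1) * (θ + 1) / (p * θ - 1) ^ 2) * x ^ 2
    + (16 * p * θ * (p + 1) * (θ + 1) * (p + θ + 2) / (p * θ - 1) ^ 3) * x
    - 16 * p * θ * (p + 1) ^ 2 * (θ + 1) ^ 2 / (p * θ - 1) ^ 4


/-- the rescaled quartic -/
def qq (p θ s : ℝ) : ℝ :=
  s ^ 4 - 16 * p * θ * ((p + 1) / (θ + 1)) ^ 2 * (((θ + 1) / (p + 1)) * s - 1) * (s - 1)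

lemma Hpoly_scale (p θ s : ℝ) (hp : 1 < p) (hpθ : p ≤ θ) :
    Hpoly p θ ((θ + 1) / (p * θ - 1) * s) = ((θ + 1) / (p * θ - 1)) ^ 4 * qq p θ s := by
  have h1 : p * θ - 1 ≠ 0 := by nlinarith
  have h2 : p + 1 ≠ 0 := by linarith
  have h3 : θ + 1 ≠ 0 := by linarith
  unfold Hpoly qq
  field_simp
  ring

lemma qq_neg (p θ : ℝ) (hp : 1 < p) (hpθ : p ≤ θ) : qq p θ (p + 1) < 0 := by
  have h2 : 0 < p + 1 := by linarith
  have h3 : 0 < θ + 1 := by linarith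
  have : qq p θ (p + 1) = (p + 1) ^ 2 / (θ + 1) ^ 2 *
      ((p + 1) ^ 2 * (θ + 1) ^ 2 - (4 * (p * θ)) ^ 2) := by
    unfold qq
    field_simp
    ring
  rw [this]
  have h4 : (p + 1) * (θ + 1) < 4 * (p * θ) := by nlinarith
  have h5 : ((p + 1) * (θ + 1)) ^ 2 < (4 * (p * θ)) ^ 2 := by
    apply pow_lt_pow_left₀ h4 (by positivity) (by norm_num)
  have h6 : 0 < (p + 1) ^ 2 / (θ + 1) ^ 2 := by positivity
  apply mul_neg_of_pos_of_neg h6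
  nlinarith

lemma qq_between (p θ s₀ s : ℝ) (hp : 1 < p) (hpθ : p ≤ θ) (h0 : qq p θ s₀ = 0)
    (hs : p + 1 < s) (hss : s < s₀) : qq p θ s < 0 := by
  have hneg := qq_neg p θ hp hpθ
  set A := 16 * p * θ * ((p + 1) / (θ + 1)) ^ 2 with hA
  set α := (θ + 1) / (p + 1) with hα
  have hq : ∀ x, qq p θ x = x ^ 4 - A * (α * x - 1) * (x - 1) := fun x => rfl
  rw [hq] at h0 hneg ⊢
  let Q : ℝ → ℝ := fun x => x ^ 3 + s₀ * x ^ 2 + (s₀ ^ 2 - A * α) * x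
    + (s₀ ^ 3 - A * α * s₀ + A * (α + 1))
  have hf : ∀ x, x ^ 4 - A * (α * x - 1) * (x - 1) = (x - s₀) * Q x := by
    intro x
    simp only [Q]
    linear_combination h0
  have h1 : Q 1 < 0 := by
    have := hf 1
    have h : (1 - s₀) * Q 1 = 1 := by rw [← this]; ring
    by_contra hc
    push Not at hc
    nlinarith
  have h2 : 0 < Q (p + 1) := by
    rw [hf] at hneg
    by_contra hc
    push Not at hc
    nlinarith
  have h3 : (s - 1) * Q (p + 1) ≤ (s - p - 1) * Q 1 + p * Q s := by
    have : (s - p - 1) * Q 1 + p * Q s - (s - 1) * Q (p + 1) =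
      (s - 1) * p * (s - p - 1) * (1 + (p + 1) + s + s₀) := by
      simp only [Q]; ring
    have h : 0 ≤ (s - 1) * p * (s - p - 1) * (1 + (p + 1) + s + s₀) := by
      apply mul_nonneg (mul_nonneg (mul_nonneg _ _) _) <;> linarith
    linarith
  have h4 : 0 < Q s := by
    by_contra hc
    push Not at hc
    nlinarith
  rw [hf]
  nlinarith

lemma exists_s (N : ℕ) (p θ x₀ : ℝ) (hp : 1 < p) (hpθ : p ≤ θ)
    (hx₀root : Hpoly p θ x₀ = 0) (hx₀max : ∀ x : ℝ, x₀ < x → Hpoly p θ x ≠ 0)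
    (hdim : (N : ℝ) < 2 + 2 * x₀) :
    ∃ s, p + 1 < s ∧ qq p θ s < 0 ∧ (N : ℝ) < 2 + 2 * ((θ + 1) / (p * θ - 1) * s) := by
  set k := (θ + 1) / (p * θ - 1) with hk
  have hk0 : 0 < k := by
    apply div_pos <;> nlinarith
  obtain ⟨s₀, hs₀⟩ : ∃ s₀, x₀ = k * s₀ := ⟨x₀ / k, by field_simp⟩
  have hroot : qq p θ s₀ = 0 := by
    rw [hs₀, Hpoly_scale p θ s₀ hp hpθ] at hx₀root
    have : k ^ 4 ≠ 0 := by positivity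
    exact (mul_eq_zero.1 hx₀root).resolve_left this
  have hmax : ∀ s, s₀ < s → qq p θ s ≠ 0 := by
    intro s hs h
    apply hx₀max (k * s) (by rw [hs₀]; gcongr)
    rw [Hpoly_scale p θ s hp hpθ, h, mul_zero]
  have hneg := qq_neg p θ hp hpθ
  have hlt : p + 1 < s₀ := by
    by_contra hc
    push Not at hc
    have hc' : s₀ < p + 1 := by
      rcases hc.lt_or_eq with h | h
      · exact h
      · rw [h] at hroot; linarith
    set A := 16 * p * θ * ((p + 1) / (θ + 1)) ^ 2 with hA
    set α := (θ + 1) / (p + 1) with hα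
    have hA0 : 0 < A := by
      have : 0 < θ := by linarith
      have : 0 < p := by linarith
      positivity
    have hα0 : 0 < α := by
      apply div_pos <;> linarith
    have hq : ∀ x, qq p θ x = x ^ 4 - A * (α * x - 1) * (x - 1) := fun x => rfl
    set S := p + 1 + A * α with hS
    have hSpos : 0 < qq p θ S := by
      rw [hq]
      have hAα : 0 < A * α := by positivity
      have h1 : 2 < S := by linarith
      have h2 : A * (α * S - 1) * (S - 1) ≤ A * α * S ^ 2 := by
        nlinarith [mul_pos hA0 hα0]
      have h3 : A * α < S := by linarith
      have h4 : A * α * S ^ 2 < S * S ^ 2 := by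
        apply mul_lt_mul_of_pos_right h3; positivity
      have h5 : S * S ^ 2 ≤ S ^ 4 := by nlinarith [pow_pos (by linarith : 0 < S) 3]
      linarith
    have hcont : ContinuousOn (qq p θ) (Icc (p + 1) S) := by
      unfold qq; fun_prop
    have := intermediate_value_Icc (by have : 0 < A * α := by positivity
                                       linarith) hcont
    obtain ⟨z, hz, hz0⟩ := this ⟨hneg.le, hSpos.le⟩
    exact hmax z (by linarith [hz.1]) hz0
  have hd : max (p + 1) (((N : ℝ) - 2) / 2 / k) < s₀ := by
    apply max_lt hlt
    rw [div_lt_iff₀ hk0]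
    rw [hs₀] at hdim
    nlinarith
  obtain ⟨s, hs1, hs2⟩ := exists_between hd
  have h1 := (max_lt_iff.1 hs1).1
  have h2 := (max_lt_iff.1 hs1).2
  refine ⟨s, h1, qq_between p θ s₀ s hp hpθ hroot h1 hs2, ?_⟩
  rw [div_lt_iff₀ hk0] at h2
  nlinarith

/-- partial derivative -/
def pd {N : ℕ} (i : Fin N) (w : EuclideanSpace ℝ (Fin N) → ℝ) (x : EuclideanSpace ℝ (Fin N)) : ℝ :=
  fderiv ℝ w x (EuclideanSpace.single i 1)

lemma lap_eq {N : ℕ} (w : EuclideanSpace ℝ (Fin N) → ℝ) (x : EuclideanSpace ℝ (Fin N)) :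
    lap w x = ∑ i : Fin N, pd i (pd i w) x := rfl

lemma pd_congr {N : ℕ} {i : Fin N} {w z : EuclideanSpace ℝ (Fin N) → ℝ}
    {x : EuclideanSpace ℝ (Fin N)} (h : w =ᶠ[nhds x] z) : pd i w =ᶠ[nhds x] pd i z := by
  filter_upwards [h.eventuallyEq_nhds] with y hy
  unfold pd
  rw [hy.fderiv_eq]

lemma lap_congr {N : ℕ} {w z : EuclideanSpace ℝ (Fin N) → ℝ}
    {x : EuclideanSpace ℝ (Fin N)} (h : w =ᶠ[nhds x] z) : lap w x = lap z x := by
  simp only [lap_eq]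
  refine Finset.sum_congr rfl fun i _ => ?_
  exact (pd_congr (pd_congr h)).eq_of_nhds

lemma pd_contDiffAt {N : ℕ} {i : Fin N} {w : EuclideanSpace ℝ (Fin N) → ℝ}
    {x : EuclideanSpace ℝ (Fin N)} (h : ContDiffAt ℝ 2 w x) : ContDiffAt ℝ 1 (pd i w) x := by
  unfold pd
  have : ContDiffAt ℝ 1 (fderiv ℝ w) x := h.fderiv_right (by norm_num)
  exact this.clm_apply contDiffAt_const

lemma pd_comp {N : ℕ} {i : Fin N} {w : EuclideanSpace ℝ (Fin N) → ℝ}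
    {x : EuclideanSpace ℝ (Fin N)} (h : DifferentiableAt ℝ w x) {G : ℝ → ℝ} {g : ℝ}
    (hG : HasDerivAt G g (w x)) :
    pd i (fun y => G (w y)) x = g * pd i w x := by
  unfold pd
  have := hG.comp_hasFDerivAt x h.hasFDerivAt
  have h2 : HasFDerivAt (fun y => G (w y)) (g • fderiv ℝ w x) x := this
  rw [h2.fderiv]
  simp

lemma pd_mul {N : ℕ} {i : Fin N} {w z : EuclideanSpace ℝ (Fin N) → ℝ}
    {x : EuclideanSpace ℝ (Fin N)} (h : DifferentiableAt ℝ w x) (h' : DifferentiableAt ℝ z x) :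
    pd i (fun y => w y * z y) x = w x * pd i z x + z x * pd i w x := by
  unfold pd
  have h2 := (h.hasFDerivAt.mul h'.hasFDerivAt)
  have h3 : fderiv ℝ (fun y => w y * z y) x = _ := h2.fderiv
  rw [h3]
  simp

/-- chain rule for the Laplacian -/
lemma lap_comp {N : ℕ} {w : EuclideanSpace ℝ (Fin N) → ℝ}
    {x : EuclideanSpace ℝ (Fin N)} (h : ContDiffAt ℝ 2 w x) {G g : ℝ → ℝ} {g' : ℝ}
    (hG : ∀ᶠ t in nhds (w x), HasDerivAt G (g t) t) (hg : HasDerivAt g g' (w x)) :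
    lap (fun y => G (w y)) x = g (w x) * lap w x + g' * ∑ i : Fin N, (pd i w x) ^ 2 := by
  simp only [lap_eq, Finset.mul_sum, ← Finset.sum_add_distrib]
  refine Finset.sum_congr rfl fun i _ => ?_
  have h1 : pd i (fun y => G (w y)) =ᶠ[nhds x] fun y => g (w y) * pd i w y := by
    have hd : ∀ᶠ y in nhds x, ContDiffAt ℝ 2 w y := h.eventually (by simp)
    filter_upwards [hd, h.continuousAt.eventually hG] with y hy hy2
    exact pd_comp (hy.differentiableAt (by norm_num)) hy2
  have hwd : DifferentiableAt ℝ w x := h.differentiableAt (by norm_num)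
  have h2 : pd i (pd i (fun y => G (w y))) x = pd i (fun y => g (w y) * pd i w y) x :=
    (pd_congr h1).eq_of_nhds
  have hgd : DifferentiableAt ℝ (fun y => g (w y)) x :=
    (hg.comp_hasFDerivAt x hwd.hasFDerivAt).differentiableAt
  rw [h2, pd_mul hgd ((pd_contDiffAt h).differentiableAt (by norm_num)), pd_comp hwd hg]
  ring

lemma lap_sub_smul {N : ℕ} {w z : EuclideanSpace ℝ (Fin N) → ℝ} {c : ℝ}
    {x : EuclideanSpace ℝ (Fin N)} (h : ContDiffAt ℝ 2 w x) (h' : ContDiffAt ℝ 2 z x) :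
    lap (fun y => c * w y - z y) x = c * lap w x - lap z x := by
  simp only [lap_eq, Finset.mul_sum, ← Finset.sum_sub_distrib]
  refine Finset.sum_congr rfl fun i _ => ?_
  have key : ∀ (a b : EuclideanSpace ℝ (Fin N) → ℝ) (y : EuclideanSpace ℝ (Fin N)),
      DifferentiableAt ℝ a y → DifferentiableAt ℝ b y →
      pd i (fun y => c * a y - b y) y = c * pd i a y - pd i b y := by
    intro a b y ha hb
    unfold pd
    have h3 : fderiv ℝ (fun y => c * a y - b y) y = _ :=
      ((ha.hasFDerivAt.const_mul c).sub hb.hasFDerivAt).fderiv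
    rw [h3]
    simp
  have h1 : pd i (fun y => c * w y - z y) =ᶠ[nhds x] fun y => c * pd i w y - pd i z y := by
    filter_upwards [h.eventually (by simp), h'.eventually (by simp)] with y hy hy2
    exact key _ _ _ (hy.differentiableAt (by norm_num)) (hy2.differentiableAt (by norm_num))
  rw [(pd_congr h1).eq_of_nhds]
  exact key _ _ _ ((pd_contDiffAt h).differentiableAt (by norm_num))
    ((pd_contDiffAt h').differentiableAt (by norm_num))

/-- necessary second order condition at a maximum -/
lemma lap_nonpos_of_isLocalMax {N : ℕ} {w : EuclideanSpace ℝ (Fin N) → ℝ}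
    {x : EuclideanSpace ℝ (Fin N)} (h : ContDiffAt ℝ 2 w x) (hm : IsLocalMax w x) :
    lap w x ≤ 0 := by
  rw [lap_eq]
  apply Finset.sum_nonpos
  intro i _
  set e : EuclideanSpace ℝ (Fin N) := EuclideanSpace.single i 1 with he
  have hl : ∀ t : ℝ, HasDerivAt (fun t : ℝ => x + t • e) e t := by
    intro t
    simpa using ((hasDerivAt_id t).smul_const e).const_add x
  have hc : Filter.Tendsto (fun t : ℝ => x + t • e) (nhds 0) (nhds x) := by
    have := (hl 0).continuousAt.tendsto
    simpa using this
  have key : ∀ (a : EuclideanSpace ℝ (Fin N) → ℝ) (t : ℝ), DifferentiableAt ℝ a (x + t • e) →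
      HasDerivAt (fun t : ℝ => a (x + t • e)) (pd i a (x + t • e)) t := by
    intro a t ha
    exact ha.hasFDerivAt.comp_hasDerivAt t (hl t)
  let f : ℝ → ℝ := fun t => w (x + t • e)
  have hd : deriv f =ᶠ[nhds 0] fun t => pd i w (x + t • e) := by
    filter_upwards [hc.eventually (h.eventually (by simp))] with t ht
    exact (key w t (ht.differentiableAt (by norm_num))).deriv
  have hpd : DifferentiableAt ℝ (pd i w) (x + (0 : ℝ) • e) := by
    simpa using (pd_contDiffAt h).differentiableAt (by norm_num)
  have hdd : deriv (deriv f) 0 = pd i (pd i w) x := by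
    rw [hd.deriv_eq, (key _ 0 hpd).deriv]
    simp
  have hmf : IsLocalMax f 0 := by
    have := hc.eventually hm
    simpa [IsLocalMax, IsMaxFilter, f] using this
  have hcf : ContinuousAt f 0 := by
    apply ContinuousAt.comp
    · simpa using h.continuousAt
    · exact (hl 0).continuousAt
  by_contra hcon
  push Not at hcon
  have hmin : IsLocalMin f 0 :=
    isLocalMin_of_deriv_deriv_pos (by rw [hdd]; exact hcon) hmf.deriv_eq_zero hcf
  have hconst : f =ᶠ[nhds 0] fun _ => f 0 := by
    filter_upwards [hmf, hmin] with t h1 h2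
    exact le_antisymm h1 h2
  have : deriv (deriv f) 0 = 0 := by
    rw [hconst.deriv.deriv_eq]
    simp
  rw [hdd] at this
  linarith

lemma mul_cont_of_tsupport {N : ℕ} {Ω : Set (EuclideanSpace ℝ (Fin N))} (hΩo : IsOpen Ω)
    {a b : EuclideanSpace ℝ (Fin N) → ℝ} (ha : ContinuousOn a Ω) (hb : Continuous b)
    (hs : tsupport b ⊆ Ω) : Continuous (fun x => a x * b x) := by
  rw [continuous_iff_continuousAt]
  intro x
  by_cases hx : x ∈ tsupport b
  · exact (ha.continuousAt (hΩo.mem_nhds (hs hx))).mul hb.continuousAt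
  · have : (fun x => a x * b x) =ᶠ[nhds x] fun _ => 0 := by
      filter_upwards [notMem_tsupport_iff_eventuallyEq.1 hx] with y hy
      simp [hy]
    exact continuousAt_const.congr this.symm

lemma mul_integrable_of_tsupport {N : ℕ} {Ω : Set (EuclideanSpace ℝ (Fin N))} (hΩo : IsOpen Ω)
    {a b : EuclideanSpace ℝ (Fin N) → ℝ} (ha : ContinuousOn a Ω) (hb : Continuous b)
    (hc : HasCompactSupport b) (hs : tsupport b ⊆ Ω) : Integrable (fun x => a x * b x) :=
  (mul_cont_of_tsupport hΩo ha hb hs).integrable_of_hasCompactSupport (hc.mul_left (f := a))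

lemma pd_continuous {N : ℕ} {i : Fin N} {w : EuclideanSpace ℝ (Fin N) → ℝ}
    (h : ContDiff ℝ 1 w) : Continuous (pd i w) := by
  unfold pd
  exact (h.continuous_fderiv (by norm_num)).clm_apply continuous_const

lemma pd_contDiffOn {N : ℕ} {Ω : Set (EuclideanSpace ℝ (Fin N))} (hΩo : IsOpen Ω) {i : Fin N}
    {w : EuclideanSpace ℝ (Fin N) → ℝ} (h : ContDiffOn ℝ 2 w Ω) : ContDiffOn ℝ 1 (pd i w) Ω :=
  fun x hx => (pd_contDiffAt (h.contDiffAt (hΩo.mem_nhds hx))).contDiffWithinAt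

lemma pd_continuousOn {N : ℕ} {Ω : Set (EuclideanSpace ℝ (Fin N))} (hΩo : IsOpen Ω) {i : Fin N}
    {w : EuclideanSpace ℝ (Fin N) → ℝ} (h : ContDiffOn ℝ 1 w Ω) : ContinuousOn (pd i w) Ω := by
  unfold pd
  exact (h.continuousOn_fderiv_of_isOpen hΩo (by norm_num)).clm_apply continuousOn_const

lemma pd_tsupport {N : ℕ} {i : Fin N} (w : EuclideanSpace ℝ (Fin N) → ℝ) :
    tsupport (pd i w) ⊆ tsupport w := by
  apply closure_minimal _ (isClosed_tsupport w)
  intro x hx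
  by_contra hc
  apply hx
  have := notMem_tsupport_iff_eventuallyEq.1 hc
  have h2 := (pd_congr (i := i) this).eq_of_nhds
  rw [h2]
  unfold pd
  have : fderiv ℝ (0 : EuclideanSpace ℝ (Fin N) → ℝ) x = 0 := by
    exact fderiv_const_apply (0 : ℝ)
  rw [this]; simp

lemma pd_hasCompactSupport {N : ℕ} {i : Fin N} {w : EuclideanSpace ℝ (Fin N) → ℝ}
    (h : HasCompactSupport w) : HasCompactSupport (pd i w) :=
  IsCompact.of_isClosed_subset h (isClosed_tsupport _) (pd_tsupport w)

/-- Green's formula -/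
lemma green {N : ℕ} {Ω : Set (EuclideanSpace ℝ (Fin N))} (hΩo : IsOpen Ω)
    {w ψ : EuclideanSpace ℝ (Fin N) → ℝ} (hw : ContDiffOn ℝ 2 w Ω) (hψ : ContDiff ℝ 1 ψ)
    (hc : HasCompactSupport ψ) (hs : tsupport ψ ⊆ Ω) :
    ∫ x, (∑ i, pd i w x * pd i ψ x) = ∫ x, (-lap w x) * ψ x := by
  have hi1 : ∀ i : Fin N, Integrable (fun x => pd i w x * pd i ψ x) := fun i =>
    mul_integrable_of_tsupport hΩo (pd_contDiffOn hΩo hw).continuousOn (pd_continuous hψ)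
      (pd_hasCompactSupport hc) ((pd_tsupport ψ).trans hs)
  have hi2 : ∀ i : Fin N, Integrable (fun x => pd i (pd i w) x * ψ x) := fun i =>
    mul_integrable_of_tsupport hΩo (pd_continuousOn hΩo (pd_contDiffOn hΩo hw)) hψ.continuous hc hs
  have hi3 : ∀ i : Fin N, Integrable (fun x => pd i w x * ψ x) := fun i =>
    mul_integrable_of_tsupport hΩo (pd_contDiffOn hΩo hw).continuousOn hψ.continuous hc hs
  rw [integral_finsetSum _ fun i _ => hi1 i]
  have : ∀ i : Fin N, ∫ x, pd i w x * pd i ψ x = - ∫ x, pd i (pd i w) x * ψ x := by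
    intro i
    apply integral_mul_fderiv_eq_neg_fderiv_mul_of_integrable (hi2 i) (hi1 i) (hi3 i)
    · intro x hx
      exact (pd_contDiffAt (hw.contDiffAt (hΩo.mem_nhds (hs hx)))).differentiableAt (by norm_num)
    · intro x _
      exact (hψ.differentiable (by norm_num)) x
  rw [Finset.sum_congr rfl fun i _ => this i, Finset.sum_neg_distrib,
    ← integral_finsetSum _ fun i _ => hi2 i, ← integral_neg]
  congr 1
  ext x
  rw [lap_eq, neg_mul, Finset.sum_mul]

/-- extension by zero of `G ∘ w` -/
def ext0 {N : ℕ} (Ω : Set (EuclideanSpace ℝ (Fin N))) (G : ℝ → ℝ)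
    (w : EuclideanSpace ℝ (Fin N) → ℝ) : EuclideanSpace ℝ (Fin N) → ℝ :=
  Ω.indicator (fun x => G (w x))

lemma ext0_of_mem {N : ℕ} {Ω : Set (EuclideanSpace ℝ (Fin N))} (hΩo : IsOpen Ω) {G : ℝ → ℝ}
    {w : EuclideanSpace ℝ (Fin N) → ℝ} {x : EuclideanSpace ℝ (Fin N)} (hx : x ∈ Ω) :
    ext0 Ω G w =ᶠ[nhds x] fun y => G (w y) := by
  filter_upwards [hΩo.mem_nhds hx] with y hy
  simp [ext0, hy]

lemma ext0_of_notMem {N : ℕ} {Ω : Set (EuclideanSpace ℝ (Fin N))} {G : ℝ → ℝ}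
    {w : EuclideanSpace ℝ (Fin N) → ℝ} (hw : ContinuousOn w (closure Ω))
    (hb : ∀ x ∈ frontier Ω, w x = 0) (hΩo : IsOpen Ω) (hG : ∀ t < 1, G t = 0)
    {x : EuclideanSpace ℝ (Fin N)} (hx : x ∉ Ω) :
    ext0 Ω G w =ᶠ[nhds x] fun _ => 0 := by
  by_cases hx2 : x ∈ closure Ω
  · have hf : x ∈ frontier Ω := by
      rw [hΩo.frontier_eq]; exact ⟨hx2, hx⟩
    have h1 := hw x hx2
    have h2 : ∀ᶠ y in nhdsWithin x (closure Ω), w y < 1 := by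
      have h3 : ∀ᶠ y in nhds (w x), y < 1 := by
        rw [hb x hf]
        exact eventually_lt_nhds one_pos
      exact h1.eventually h3
    rw [eventually_nhdsWithin_iff] at h2
    filter_upwards [h2] with y hy
    by_cases hyΩ : y ∈ Ω
    · simp only [ext0, Set.indicator_of_mem hyΩ]
      exact hG _ (hy (subset_closure hyΩ))
    · simp [ext0, hyΩ]
  · filter_upwards [isClosed_closure.isOpen_compl.mem_nhds hx2] with y hy
    have : y ∉ Ω := fun h => hy (subset_closure h)
    simp [ext0, this]

lemma ext0_tsupport {N : ℕ} {Ω : Set (EuclideanSpace ℝ (Fin N))} {G : ℝ → ℝ}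
    {w : EuclideanSpace ℝ (Fin N) → ℝ} (hw : ContinuousOn w (closure Ω))
    (hb : ∀ x ∈ frontier Ω, w x = 0) (hΩo : IsOpen Ω) (hG : ∀ t < 1, G t = 0) :
    tsupport (ext0 Ω G w) ⊆ Ω := by
  intro x hx
  by_contra hc
  exact (notMem_tsupport_iff_eventuallyEq.2 (ext0_of_notMem hw hb hΩo hG hc)) hx

lemma ext0_compact {N : ℕ} {Ω : Set (EuclideanSpace ℝ (Fin N))} {G : ℝ → ℝ}
    {w : EuclideanSpace ℝ (Fin N) → ℝ} (hΩb : Bornology.IsBounded Ω) :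
    HasCompactSupport (ext0 Ω G w) := by
  apply HasCompactSupport.intro hΩb.isCompact_closure
  intro x hx
  have : x ∉ Ω := fun h => hx (subset_closure h)
  simp [ext0, this]

lemma ext0_contDiff {N : ℕ} {Ω : Set (EuclideanSpace ℝ (Fin N))} {G : ℝ → ℝ} {n : WithTop ℕ∞}
    {w : EuclideanSpace ℝ (Fin N) → ℝ} (hw : ContinuousOn w (closure Ω))
    (hb : ∀ x ∈ frontier Ω, w x = 0) (hΩo : IsOpen Ω) (hG : ∀ t < 1, G t = 0)
    (hGn : ContDiff ℝ n G) (hwn : ContDiffOn ℝ n w Ω) : ContDiff ℝ n (ext0 Ω G w) := by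
  rw [contDiff_iff_contDiffAt]
  intro x
  by_cases hx : x ∈ Ω
  · apply ContDiffAt.congr_of_eventuallyEq _ (ext0_of_mem hΩo hx)
    exact hGn.contDiffAt.comp x (hwn.contDiffAt (hΩo.mem_nhds hx))
  · exact contDiffAt_const.congr_of_eventuallyEq (ext0_of_notMem hw hb hΩo hG hx)

lemma sq_norm_gradient {N : ℕ} (φ : EuclideanSpace ℝ (Fin N) → ℝ) (x : EuclideanSpace ℝ (Fin N)) :
    ‖gradient φ x‖ ^ 2 = ∑ i, (pd i φ x) ^ 2 := by
  rw [EuclideanSpace.norm_sq_eq]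
  refine Finset.sum_congr rfl fun i _ => ?_
  rw [Real.norm_eq_abs, sq_abs]
  congr 1
  unfold pd gradient
  have := InnerProductSpace.toDual_symm_apply (𝕜 := ℝ) (y := fderiv ℝ φ x)
    (x := EuclideanSpace.single i 1)
  rw [← this, EuclideanSpace.inner_single_right]
  simp

/-- primitive vanishing at `0` -/
def prim (g : ℝ → ℝ) (t : ℝ) : ℝ := ∫ τ in (0 : ℝ)..t, g τ

lemma prim_hasDerivAt {g : ℝ → ℝ} (hg : Continuous g) (t : ℝ) : HasDerivAt (prim g) (g t) t :=
  intervalIntegral.integral_hasDerivAt_right (hg.intervalIntegrable _ _)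
    (hg.stronglyMeasurableAtFilter _ _) hg.continuousAt

lemma prim_contDiff {g : ℝ → ℝ} (hg : Continuous g) : ContDiff ℝ 1 (prim g) := by
  rw [contDiff_one_iff_deriv]
  refine ⟨fun t => (prim_hasDerivAt hg t).differentiableAt, ?_⟩
  have : deriv (prim g) = g := funext fun t => (prim_hasDerivAt hg t).deriv
  rw [this]; exact hg

lemma prim_zero {g : ℝ → ℝ} (hg : ∀ t ≤ 1, g t = 0) : ∀ t < 1, prim g t = 0 := by
  intro t ht
  unfold prim
  apply intervalIntegral.integral_zero_ae
  filter_upwards with τ hτ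
  apply hg
  rw [uIoc, mem_Ioc] at hτ
  rcases le_max_iff.1 hτ.2 with h | h <;> linarith

/-- energy identity -/
lemma energy {N : ℕ} {Ω : Set (EuclideanSpace ℝ (Fin N))} (hΩo : IsOpen Ω)
    (hΩb : Bornology.IsBounded Ω)
    {w : EuclideanSpace ℝ (Fin N) → ℝ} (hw2 : ContDiffOn ℝ 2 w Ω) (hw : ContinuousOn w (closure Ω))
    (hb : ∀ x ∈ frontier Ω, w x = 0) {g : ℝ → ℝ} (hg : Continuous g) (hg0 : ∀ t ≤ 1, g t = 0) :
    ∫ x in Ω, ‖gradient (ext0 Ω (prim g) w) x‖ ^ 2 =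
      ∫ x in Ω, (-lap w x) * prim (fun t => g t ^ 2) (w x) := by
  have hg2 : Continuous fun t => g t ^ 2 := hg.pow 2
  have hg20 : ∀ t ≤ 1, (fun t => g t ^ 2) t = 0 := fun t ht => by simp [hg0 t ht]
  have hw1 : ContDiffOn ℝ 1 w Ω := hw2.of_le (by norm_num)
  have hG := green hΩo hw2
    (ext0_contDiff hw hb hΩo (prim_zero hg20) (prim_contDiff hg2) hw1)
    (ext0_compact hΩb) (ext0_tsupport hw hb hΩo (prim_zero hg20))
  have hout : ∀ (k : ℝ → ℝ), (∀ t < 1, k t = 0) → ∀ x, x ∉ Ω → ∀ i, pd i (ext0 Ω k w) x = 0 := by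
    intro k hk x hx i
    by_contra hc
    exact hx (ext0_tsupport hw hb hΩo hk (pd_tsupport _ (subset_tsupport _ hc)))
  have e1 : ∫ x in Ω, ‖gradient (ext0 Ω (prim g) w) x‖ ^ 2 =
      ∫ x, (∑ i, pd i w x * pd i (ext0 Ω (prim fun t => g t ^ 2) w) x) := by
    rw [← setIntegral_eq_integral_of_forall_compl_eq_zero (s := Ω)
      (f := fun x => ∑ i, pd i w x * pd i (ext0 Ω (prim fun t => g t ^ 2) w) x)]
    · apply setIntegral_congr_fun hΩo.measurableSet
      intro x hx
      simp only [sq_norm_gradient]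
      refine Finset.sum_congr rfl fun i _ => ?_
      have hd : DifferentiableAt ℝ w x :=
        (hw1.contDiffAt (hΩo.mem_nhds hx)).differentiableAt (by norm_num)
      rw [(pd_congr (ext0_of_mem hΩo hx)).eq_of_nhds, (pd_congr (ext0_of_mem hΩo hx)).eq_of_nhds,
        pd_comp hd (prim_hasDerivAt hg _), pd_comp hd (prim_hasDerivAt hg2 _)]
      ring
    · intro x hx
      apply Finset.sum_eq_zero
      intro i _
      rw [hout _ (prim_zero hg20) x hx i, mul_zero]
  rw [e1, hG, ← setIntegral_eq_integral_of_forall_compl_eq_zero (s := Ω)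
    (f := fun x => -lap w x * ext0 Ω (prim fun t => g t ^ 2) w x)]
  · apply setIntegral_congr_fun hΩo.measurableSet
    intro x hx
    simp [ext0, hx]
  · intro x hx
    simp [ext0, hx]

lemma norm_gradient_eq {N : ℕ} (φ : EuclideanSpace ℝ (Fin N) → ℝ) (x : EuclideanSpace ℝ (Fin N)) :
    ‖gradient φ x‖ = ‖fderiv ℝ φ x‖ := by
  unfold gradient
  simp

/-- smooth approximation of `C¹` compactly supported functions -/
lemma approx_smooth {N : ℕ} {Ω : Set (EuclideanSpace ℝ (Fin N))} (hΩo : IsOpen Ω)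
    {φ : EuclideanSpace ℝ (Fin N) → ℝ} (hφ : ContDiff ℝ 1 φ) (hc : HasCompactSupport φ)
    (hs : tsupport φ ⊆ Ω) {ε : ℝ} (hε : 0 < ε) :
    ∃ ψ, IsTestFun Ω ψ ∧ (∀ x, |ψ x - φ x| ≤ ε) ∧ ∀ x, ‖fderiv ℝ ψ x - fderiv ℝ φ x‖ ≤ ε := by
  obtain ⟨δ₀, hδ₀, hδ₀s⟩ := hc.isCompact.exists_cthickening_subset_open hΩo hs
  have hu1 : UniformContinuous φ := hc.uniformContinuous_of_continuous hφ.continuous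
  have hu2 : UniformContinuous (fderiv ℝ φ) :=
    (hc.fderiv ℝ).uniformContinuous_of_continuous (hφ.continuous_fderiv (by norm_num))
  obtain ⟨δ₁, hδ₁, h1⟩ := Metric.uniformContinuous_iff.1 hu1 ε hε
  obtain ⟨δ₂, hδ₂, h2⟩ := Metric.uniformContinuous_iff.1 hu2 ε hε
  set δ := min δ₀ (min δ₁ δ₂) with hδ
  have hδpos : 0 < δ := by positivity
  let b : ContDiffBump (0 : EuclideanSpace ℝ (Fin N)) := ⟨δ / 2, δ, half_pos hδpos, half_lt_self hδpos⟩
  have hbr : b.rOut = δ := rfl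
  let ψ : EuclideanSpace ℝ (Fin N) → ℝ :=
    convolution (b.normed volume) φ (ContinuousLinearMap.lsmul ℝ ℝ) volume
  have hsupp : Function.support ψ ⊆ cthickening δ₀ (tsupport φ) := by
    intro x hx
    have := (support_convolution_subset (L := ContinuousLinearMap.lsmul ℝ ℝ) (μ := volume)
      (f := b.normed volume) (g := φ)) hx
    obtain ⟨y, hy, z, hz, rfl⟩ := Set.mem_add.1 this
    rw [b.support_normed_eq, hbr, mem_ball_zero_iff] at hy
    apply mem_cthickening_of_dist_le _ z _ _ (subset_tsupport _ hz)
    rw [dist_eq_norm]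
    simp only [add_sub_cancel_right]
    exact hy.le.trans (min_le_left _ _)
  have htsupp : tsupport ψ ⊆ cthickening δ₀ (tsupport φ) :=
    closure_minimal hsupp isClosed_cthickening
  have hcompact : HasCompactSupport ψ :=
    IsCompact.of_isClosed_subset hc.isCompact.cthickening (isClosed_tsupport _) htsupp
  have hli : LocallyIntegrable φ volume := hφ.continuous.locallyIntegrable
  have hsm : ContDiff ℝ (⊤ : ℕ∞) ψ :=
    b.hasCompactSupport_normed.contDiff_convolution_left _ b.contDiff_normed hli
  refine ⟨ψ, ⟨hsm, hcompact, htsupp.trans hδ₀s⟩, ?_, ?_⟩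
  · intro x
    rw [← Real.dist_eq]
    apply b.dist_normed_convolution_le hφ.continuous.aestronglyMeasurable
    intro y hy
    rw [hbr, mem_ball] at hy
    exact (h1 (hy.trans_le ((min_le_right _ _).trans (min_le_left _ _)))).le
  · intro x
    have hlb : LocallyIntegrable (b.normed volume) volume :=
      (b.contDiff_normed (n := 0)).continuous.locallyIntegrable
    have hd := hc.hasFDerivAt_convolution_right (ContinuousLinearMap.lsmul ℝ ℝ) hlb hφ x
    have he : (convolution (b.normed volume) (fderiv ℝ φ)
        ((ContinuousLinearMap.lsmul ℝ ℝ).precompR (EuclideanSpace ℝ (Fin N))) volume) x =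
        (convolution (b.normed volume) (fderiv ℝ φ) (ContinuousLinearMap.lsmul ℝ ℝ) volume) x := by
      unfold convolution
      congr 1
    rw [he] at hd
    have hd' : fderiv ℝ ψ x = _ := hd.fderiv
    rw [hd', ← dist_eq_norm]
    apply b.dist_normed_convolution_le (hφ.continuous_fderiv (by norm_num)).aestronglyMeasurable
    intro y hy
    rw [hbr, mem_ball] at hy
    exact (h2 (hy.trans_le ((min_le_right _ _).trans (min_le_right _ _)))).le

/-- stability inequality for `C¹` test functions -/
lemma stable_C1 {N : ℕ} {Ω : Set (EuclideanSpace ℝ (Fin N))} (hΩo : IsOpen Ω)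
    (hΩb : Bornology.IsBounded Ω) {lam gam p θ : ℝ} {u v : EuclideanSpace ℝ (Fin N) → ℝ}
    (hst : IsStable Ω lam gam p θ u v) (hu : ∀ x ∈ Ω, 0 < u x) (hv : ∀ x ∈ Ω, 0 < v x)
    (hwgt : IntegrableOn (fun x => (v x + 1) ^ ((p - 1) / 2) * (u x + 1) ^ ((θ - 1) / 2)) Ω)
    {φ : EuclideanSpace ℝ (Fin N) → ℝ} (hφ : ContDiff ℝ 1 φ) (hc : HasCompactSupport φ)
    (hs : tsupport φ ⊆ Ω) :
    Real.sqrt (lam * gam * p * θ) *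
        ∫ x in Ω, (v x + 1) ^ ((p - 1) / 2) * (u x + 1) ^ ((θ - 1) / 2) * φ x ^ 2
      ≤ ∫ x in Ω, ‖gradient φ x‖ ^ 2 := by
  set ω : EuclideanSpace ℝ (Fin N) → ℝ :=
    fun x => (v x + 1) ^ ((p - 1) / 2) * (u x + 1) ^ ((θ - 1) / 2) with hω
  have hω0 : ∀ x ∈ Ω, 0 ≤ ω x := by
    intro x hx
    have := hu x hx
    have := hv x hx
    positivity
  set S := Real.sqrt (lam * gam * p * θ) with hS
  have hS0 : 0 ≤ S := Real.sqrt_nonneg _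
  obtain ⟨B, hB⟩ := hφ.continuous.bounded_above_of_compact_support hc
  obtain ⟨B', hB'⟩ := (hφ.continuous_fderiv (by norm_num)).bounded_above_of_compact_support
    (hc.fderiv ℝ)
  have hB0 : 0 ≤ B := (norm_nonneg _).trans (hB 0)
  have hB'0 : 0 ≤ B' := (norm_nonneg _).trans (hB' 0)
  have hfin : volume Ω ≠ ⊤ := hΩb.measure_lt_top.ne
  set m := (volume Ω).toReal with hm
  set I := ∫ x in Ω, ω x with hI
  have hI0 : 0 ≤ I := setIntegral_nonneg hΩo.measurableSet hω0
  set C := S * ((2 * B + 1) * I) + (2 * B' + 1) * m + 1 with hC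
  have hC0 : 0 < C := by positivity
  have hmulint : ∀ f : EuclideanSpace ℝ (Fin N) → ℝ, Continuous f → HasCompactSupport f →
      IntegrableOn (fun x => ω x * f x ^ 2) Ω := by
    intro f hf hfc
    obtain ⟨D, hD⟩ := hf.bounded_above_of_compact_support hfc
    apply Integrable.mul_bdd (c := D ^ 2) hwgt (hf.pow 2).aestronglyMeasurable
    filter_upwards with x
    rw [Pi.pow_apply, norm_pow]
    exact pow_le_pow_left₀ (norm_nonneg _) (hD x) 2
  have hgradint : ∀ f : EuclideanSpace ℝ (Fin N) → ℝ, ContDiff ℝ 1 f → HasCompactSupport f →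
      Integrable (fun x => ‖fderiv ℝ f x‖ ^ 2) := by
    intro f hf hfc
    apply Continuous.integrable_of_hasCompactSupport
    · exact (hf.continuous_fderiv (by norm_num)).norm.pow 2
    · exact (hfc.fderiv ℝ).comp_left (g := fun y => ‖y‖ ^ 2) (by simp)
  have main : ∀ ε : ℝ, 0 < ε → ε ≤ 1 →
      S * ∫ x in Ω, ω x * φ x ^ 2 ≤ (∫ x in Ω, ‖gradient φ x‖ ^ 2) + C * ε := by
    intro ε hε hε1
    obtain ⟨ψ, hψ, h1, h2⟩ := approx_smooth hΩo hφ hc hs hε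
    have hψ1 : ContDiff ℝ 1 ψ := hψ.1.of_le (by exact_mod_cast le_top)
    have h3 := hst ψ hψ
    have h4 : ∫ x in Ω, ω x * φ x ^ 2 ≤ (∫ x in Ω, ω x * ψ x ^ 2) + (2 * B + 1) * I * ε := by
      have : (2 * B + 1) * I * ε = ∫ x in Ω, ω x * ((2 * B + 1) * ε) := by
        rw [integral_mul_const]; ring
      rw [this, ← integral_add (hmulint ψ hψ1.continuous hψ.2.1) (hwgt.mul_const _)]
      apply setIntegral_mono_on (hmulint φ hφ.continuous hc)
        ((hmulint ψ hψ1.continuous hψ.2.1).add (hwgt.mul_const _)) hΩo.measurableSet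
      intro x hx
      simp only [Pi.add_apply]
      rw [← mul_add]
      apply mul_le_mul_of_nonneg_left _ (hω0 x hx)
      have a1 := abs_le.1 (h1 x)
      have a2 := abs_le.1 (hB x)
      nlinarith [sq_nonneg (ψ x - φ x), a1.1, a1.2, a2.1, a2.2]
    have h5 : ∫ x in Ω, ‖gradient ψ x‖ ^ 2 ≤
        (∫ x in Ω, ‖gradient φ x‖ ^ 2) + (2 * B' + 1) * m * ε := by
      simp only [norm_gradient_eq]
      have : (2 * B' + 1) * m * ε = ∫ x in Ω, ((2 * B' + 1) * ε) := by
        rw [setIntegral_const, smul_eq_mul, Measure.real]; ring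
      have hci : IntegrableOn (fun _ : EuclideanSpace ℝ (Fin N) => (2 * B' + 1) * ε) Ω :=
        integrableOn_const hfin
      rw [this, ← integral_add (hgradint φ hφ hc).integrableOn hci]
      apply setIntegral_mono_on (hgradint ψ hψ1 hψ.2.1).integrableOn
        ((hgradint φ hφ hc).integrableOn.add hci) hΩo.measurableSet
      intro x hx
      simp only [Pi.add_apply]
      have a1 := h2 x
      have a2 := hB' x
      have a3 : ‖fderiv ℝ ψ x‖ ≤ ‖fderiv ℝ φ x‖ + ε := by
        have := norm_add_le (fderiv ℝ φ x) (fderiv ℝ ψ x - fderiv ℝ φ x)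
        rw [add_sub_cancel] at this
        linarith
      have a4 : ‖fderiv ℝ ψ x‖ ^ 2 ≤ (‖fderiv ℝ φ x‖ + ε) ^ 2 :=
        pow_le_pow_left₀ (norm_nonneg _) a3 2
      nlinarith
    have h6 := mul_le_mul_of_nonneg_left h4 hS0
    have h7 : S * ∫ x in Ω, ω x * ψ x ^ 2 ≤ ∫ x in Ω, ‖gradient ψ x‖ ^ 2 := h3
    rw [hC]
    nlinarith
  apply le_of_forall_pos_le_add
  intro η hη
  have h8 := main (min 1 (η / C)) (by positivity) (min_le_left _ _)
  have h9 : C * min 1 (η / C) ≤ η := by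
    calc C * min 1 (η / C) ≤ C * (η / C) := by
          apply mul_le_mul_of_nonneg_left (min_le_right _ _) hC0.le
      _ = η := by field_simp
  exact h8.trans (by linarith)

/-- Gaussian -/
def gau {N : ℕ} (z : EuclideanSpace ℝ (Fin N)) : ℝ := Real.exp (-(1 / 2) * ‖z‖ ^ 2)

lemma gauss_integrable {N : ℕ} {b : ℝ} (hb : 0 < b) :
    Integrable (fun z : EuclideanSpace ℝ (Fin N) => Real.exp (-b * ‖z‖ ^ 2)) := by
  by_contra hc
  have h1 := integral_undef hc
  rw [GaussianFourier.integral_rexp_neg_mul_sq_norm hb] at h1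
  have : 0 < (π / b) ^ ((Module.finrank ℝ (EuclideanSpace ℝ (Fin N)) : ℝ) / 2) := by positivity
  linarith

lemma gau_integrable {N : ℕ} : Integrable (gau (N := N)) := gauss_integrable (by norm_num)

lemma gau_pos {N : ℕ} (z : EuclideanSpace ℝ (Fin N)) : 0 < gau z := Real.exp_pos _

lemma gau_le_one {N : ℕ} (z : EuclideanSpace ℝ (Fin N)) : gau z ≤ 1 := by
  unfold gau
  rw [Real.exp_le_one_iff]
  nlinarith [sq_nonneg ‖z‖]

lemma gau_continuous {N : ℕ} : Continuous (gau (N := N)) := by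
  unfold gau; fun_prop

lemma gau_norm_le {N : ℕ} (z : EuclideanSpace ℝ (Fin N)) :
    ‖z‖ * gau z ≤ Real.exp (-(1 / 4) * ‖z‖ ^ 2) := by
  have h1 : ‖z‖ ≤ Real.exp ((1 / 4) * ‖z‖ ^ 2) := by
    have := Real.add_one_le_exp ((1 / 4) * ‖z‖ ^ 2)
    nlinarith [sq_nonneg (‖z‖ / 2 - 1)]
  calc ‖z‖ * gau z ≤ Real.exp ((1 / 4) * ‖z‖ ^ 2) * gau z :=
        mul_le_mul_of_nonneg_right h1 (gau_pos z).le
    _ = _ := by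
        unfold gau
        rw [← Real.exp_add]
        congr 1
        ring

lemma gau_norm_integrable {N : ℕ} :
    Integrable (fun z : EuclideanSpace ℝ (Fin N) => ‖z‖ * gau z) := by
  apply (gauss_integrable (N := N) (b := 1 / 4) (by norm_num)).mono'
  · exact (continuous_norm.mul gau_continuous).aestronglyMeasurable
  · filter_upwards with z
    rw [Real.norm_of_nonneg (mul_nonneg (norm_nonneg _) (gau_pos z).le)]
    exact gau_norm_le z

lemma gau_hasFDerivAt {N : ℕ} (z : EuclideanSpace ℝ (Fin N)) :
    HasFDerivAt gau (-(gau z) • innerSL ℝ z) z := by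
  have h1 : HasFDerivAt (fun z : EuclideanSpace ℝ (Fin N) => ‖z‖ ^ 2) (2 • innerSL ℝ z) z :=
    (hasStrictFDerivAt_norm_sq z).hasFDerivAt
  have h2 := (h1.const_mul (-(1 / 2) : ℝ)).exp
  unfold gau
  refine h2.congr_fderiv ?_
  ext y
  simp [two_smul]
  ring

lemma pd_gau {N : ℕ} (i : Fin N) (z : EuclideanSpace ℝ (Fin N)) : pd i gau z = -(z i * gau z) := by
  unfold pd
  rw [(gau_hasFDerivAt z).fderiv]
  simp [EuclideanSpace.inner_single_right]
  ring

lemma pd_comp_affine {N : ℕ} (i : Fin N) {w : EuclideanSpace ℝ (Fin N) → ℝ}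
    (x z : EuclideanSpace ℝ (Fin N)) (τ : ℝ) (hw : DifferentiableAt ℝ w (x + τ • z)) :
    pd i (fun z => w (x + τ • z)) z = τ * pd i w (x + τ • z) := by
  unfold pd
  have h1 : HasFDerivAt (fun z : EuclideanSpace ℝ (Fin N) => x + τ • z)
      (τ • ContinuousLinearMap.id ℝ (EuclideanSpace ℝ (Fin N))) z :=
    ((hasFDerivAt_id z).const_smul τ).const_add x
  have h2 : HasFDerivAt (fun z => w (x + τ • z)) _ z := hw.hasFDerivAt.comp z h1
  rw [h2.fderiv]
  simp

lemma fderiv_apply_eq_sum {N : ℕ} (w : EuclideanSpace ℝ (Fin N) → ℝ)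
    (y z : EuclideanSpace ℝ (Fin N)) : fderiv ℝ w y z = ∑ i, z i * pd i w y := by
  have h : z = ∑ i, z i • (EuclideanSpace.single i (1 : ℝ)) := by
    have := (EuclideanSpace.basisFun (Fin N) ℝ).sum_repr z
    simpa using this.symm
  conv_lhs => rw [h]
  simp [pd]

lemma coord_le {N : ℕ} (i : Fin N) (z : EuclideanSpace ℝ (Fin N)) : |z i| ≤ ‖z‖ := by
  have := PiLp.norm_apply_le z i
  simpa using this

/-- integration by parts against a Gaussian -/
lemma gau_ibp {N : ℕ} {W : EuclideanSpace ℝ (Fin N) → ℝ} (hW : ContDiff ℝ 2 W)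
    (hc : HasCompactSupport W) (x : EuclideanSpace ℝ (Fin N)) (τ : ℝ) :
    ∫ z, gau z * fderiv ℝ W (x + τ • z) z = τ * ∫ z, gau z * lap W (x + τ • z) := by
  have hW1 : ContDiff ℝ 1 W := hW.of_le (by norm_num)
  have hpd1 : ∀ i : Fin N, ContDiff ℝ 1 (pd i W) := fun i => by
    rw [contDiff_iff_contDiffAt]; exact fun x => pd_contDiffAt hW.contDiffAt
  have hcont : Continuous fun z : EuclideanSpace ℝ (Fin N) => x + τ • z := by fun_prop
  have hb : ∀ i : Fin N, ∃ B, ∀ y, ‖pd i W y‖ ≤ B := fun i =>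
    (hpd1 i).continuous.bounded_above_of_compact_support (pd_hasCompactSupport hc)
  have hb2 : ∀ i : Fin N, ∃ B, ∀ y, ‖pd i (pd i W) y‖ ≤ B := fun i =>
    (pd_continuous (hpd1 i)).bounded_above_of_compact_support
      (pd_hasCompactSupport (pd_hasCompactSupport hc))
  have hi1 : ∀ i : Fin N, Integrable fun z => pd i W (x + τ • z) * gau z := by
    intro i
    obtain ⟨B, hB⟩ := hb i
    exact gau_integrable.bdd_mul (c := B)
      ((hpd1 i).continuous.comp hcont).aestronglyMeasurable (Filter.Eventually.of_forall fun z => hB _)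
  have hi2 : ∀ i : Fin N, Integrable fun z => pd i (pd i W) (x + τ • z) * gau z := by
    intro i
    obtain ⟨B, hB⟩ := hb2 i
    exact gau_integrable.bdd_mul (c := B)
      ((pd_continuous (hpd1 i)).comp hcont).aestronglyMeasurable
      (Filter.Eventually.of_forall fun z => hB _)
  have hi3 : ∀ i : Fin N, Integrable fun z => pd i W (x + τ • z) * (z i * gau z) := by
    intro i
    obtain ⟨B, hB⟩ := hb i
    refine Integrable.bdd_mul (c := B) ?_
      ((hpd1 i).continuous.comp hcont).aestronglyMeasurable (Filter.Eventually.of_forall fun z => hB _)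
    apply gau_norm_integrable.mono'
    · apply Continuous.aestronglyMeasurable
      apply Continuous.mul _ gau_continuous
      fun_prop
    · filter_upwards with z
      rw [norm_mul, Real.norm_of_nonneg (gau_pos z).le]
      exact mul_le_mul_of_nonneg_right (coord_le i z) (gau_pos z).le
  have hpda : ∀ (i : Fin N) z, pd i (fun z => pd i W (x + τ • z)) z
      = τ * pd i (pd i W) (x + τ • z) := fun i z =>
    pd_comp_affine i x z τ ((hpd1 i).differentiable (by norm_num) _)
  have key : ∀ i : Fin N, ∫ z, pd i W (x + τ • z) * (z i * gau z) =
      τ * ∫ z, pd i (pd i W) (x + τ • z) * gau z := by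
    intro i
    have h := integral_mul_fderiv_eq_neg_fderiv_mul_of_integrable (μ := volume)
      (f := fun z => pd i W (x + τ • z)) (g := gau) (v := EuclideanSpace.single i (1 : ℝ))
      (by
        have : (fun z => fderiv ℝ (fun z => pd i W (x + τ • z)) z (EuclideanSpace.single i (1 : ℝ))
            * gau z) = fun z => τ * (pd i (pd i W) (x + τ • z) * gau z) := by
          funext z
          have := hpda i z
          unfold pd at this ⊢
          rw [this]; ring
        rw [this]
        exact (hi2 i).const_mul τ)
      (by
        have : (fun z => pd i W (x + τ • z) * fderiv ℝ gau z (EuclideanSpace.single i (1 : ℝ)))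
            = fun z => -(pd i W (x + τ • z) * (z i * gau z)) := by
          funext z
          have : fderiv ℝ gau z (EuclideanSpace.single i (1 : ℝ)) = _ := pd_gau i z
          rw [this]; ring
        rw [this]
        exact (hi3 i).neg)
      (hi1 i)
      (fun z _ => (((hpd1 i).differentiable (by norm_num)).comp (by fun_prop :
        Differentiable ℝ fun z : EuclideanSpace ℝ (Fin N) => x + τ • z)) z)
      (fun z _ => (gau_hasFDerivAt z).differentiableAt)
    have e1 : ∫ z, pd i W (x + τ • z) * fderiv ℝ gau z (EuclideanSpace.single i (1 : ℝ)) =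
        - ∫ z, pd i W (x + τ • z) * (z i * gau z) := by
      rw [← integral_neg]
      congr 1; funext z
      have : fderiv ℝ gau z (EuclideanSpace.single i (1 : ℝ)) = _ := pd_gau i z
      rw [this]; ring
    have e2 : ∫ z, fderiv ℝ (fun z => pd i W (x + τ • z)) z (EuclideanSpace.single i (1 : ℝ)) * gau z
        = τ * ∫ z, pd i (pd i W) (x + τ • z) * gau z := by
      rw [← integral_const_mul]
      congr 1; funext z
      have : fderiv ℝ (fun z => pd i W (x + τ • z)) z (EuclideanSpace.single i (1 : ℝ)) = _ :=
        hpda i z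
      rw [this]; ring
    rw [e1, e2] at h
    linarith
  have l1 : ∫ z, gau z * fderiv ℝ W (x + τ • z) z =
      ∑ i : Fin N, ∫ z, pd i W (x + τ • z) * (z i * gau z) := by
    rw [← integral_finsetSum _ fun i _ => hi3 i]
    congr 1; funext z
    rw [fderiv_apply_eq_sum, Finset.mul_sum]
    exact Finset.sum_congr rfl fun i _ => by ring
  have l2 : ∫ z, gau z * lap W (x + τ • z) =
      ∑ i : Fin N, ∫ z, pd i (pd i W) (x + τ • z) * gau z := by
    rw [← integral_finsetSum _ fun i _ => hi2 i]
    congr 1; funext z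
    rw [lap_eq, Finset.mul_sum]
    exact Finset.sum_congr rfl fun i _ => by ring
  rw [l1, l2, Finset.mul_sum]
  exact Finset.sum_congr rfl fun i _ => key i

lemma memLp_of_rpow {N : ℕ} {f : EuclideanSpace ℝ (Fin N) → ℝ} {r : ℝ} (hr : 0 < r)
    (hf : Measurable f) (hf0 : ∀ x, 0 ≤ f x) (hi : Integrable (fun x => f x ^ r)) :
    MemLp f (ENNReal.ofReal r) := by
  rw [← integrable_norm_rpow_iff hf.aestronglyMeasurable (by simpa using hr) ENNReal.ofReal_ne_top]
  rw [ENNReal.toReal_ofReal hr.le]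
  simpa only [Real.norm_of_nonneg (hf0 _)] using hi

lemma gau_rpow_integrable {N : ℕ} {q : ℝ} (hq : 0 < q) :
    Integrable (fun z : EuclideanSpace ℝ (Fin N) => gau z ^ q) := by
  have : (fun z : EuclideanSpace ℝ (Fin N) => gau z ^ q) =
      fun z => Real.exp (-(q / 2) * ‖z‖ ^ 2) := by
    funext z
    unfold gau
    rw [← Real.exp_mul]
    congr 1; ring
  rw [this]
  exact gauss_integrable (by positivity)

lemma rpow_affine_integrable {N : ℕ} {f : EuclideanSpace ℝ (Fin N) → ℝ}
    (hi : Integrable f) (x : EuclideanSpace ℝ (Fin N)) {τ : ℝ}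
    (hτ : 0 < τ) : Integrable (fun z => f (x + τ • z)) :=
  (hi.comp_add_left x).comp_smul hτ.ne'

lemma integral_affine {N : ℕ} (f : EuclideanSpace ℝ (Fin N) → ℝ)
    (x : EuclideanSpace ℝ (Fin N)) {τ : ℝ} (hτ : 0 < τ) :
    ∫ z, f (x + τ • z) = (τ ^ N)⁻¹ * ∫ z, f z := by
  have h1 := Measure.integral_comp_smul_of_nonneg (volume : Measure (EuclideanSpace ℝ (Fin N)))
    (fun z => f (x + z)) τ (hR := hτ.le)
  rw [h1, integral_add_left_eq_self]
  simp

lemma gau_mul_integrable {N : ℕ} {f : EuclideanSpace ℝ (Fin N) → ℝ} {r : ℝ} (hr : 1 < r)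
    (hf : Measurable f) (hf0 : ∀ x, 0 ≤ f x) (hi : Integrable (fun x => f x ^ r))
    (x : EuclideanSpace ℝ (Fin N)) {τ : ℝ} (hτ : 0 < τ) :
    Integrable (fun z => gau z * f (x + τ • z)) := by
  apply (gau_integrable.add (rpow_affine_integrable hi x hτ)).mono'
  · apply AEStronglyMeasurable.mul gau_continuous.aestronglyMeasurable
    apply Measurable.aestronglyMeasurable
    apply hf.comp
    fun_prop
  · filter_upwards with z
    have h0 := hf0 (x + τ • z)
    rw [Real.norm_of_nonneg (mul_nonneg (gau_pos z).le h0)]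
    simp only [Pi.add_apply]
    have h2 := Real.rpow_nonneg h0 r
    rcases le_total (f (x + τ • z)) 1 with h | h
    · nlinarith [gau_pos z]
    · have : f (x + τ • z) ≤ f (x + τ • z) ^ r := by
        conv_lhs => rw [← Real.rpow_one (f (x + τ • z))]
        exact Real.rpow_le_rpow_of_exponent_le h hr.le
      nlinarith [gau_pos z, gau_le_one z]

lemma gau_holder {N : ℕ} {r : ℝ} (hr : 1 < r) : ∃ κ : ℝ, 0 ≤ κ ∧
    ∀ f : EuclideanSpace ℝ (Fin N) → ℝ, Measurable f → (∀ x, 0 ≤ f x) →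
    Integrable (fun x => f x ^ r) → ∀ x : EuclideanSpace ℝ (Fin N), ∀ τ : ℝ, 0 < τ →
    ∫ z, gau z * f (x + τ • z) ≤ κ * (τ ^ (-(N : ℝ) / r) * (∫ z, f z ^ r) ^ (1 / r)) := by
  have hc := (Real.HolderConjugate.conjExponent hr).symm
  have hq : 0 < r.conjExponent := hc.pos
  refine ⟨(∫ z : EuclideanSpace ℝ (Fin N), gau z ^ r.conjExponent) ^ (1 / r.conjExponent),
    Real.rpow_nonneg (integral_nonneg fun z => Real.rpow_nonneg (gau_pos z).le _) _, ?_⟩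
  intro f hf hf0 hi x τ hτ
  have hm : Measurable fun z : EuclideanSpace ℝ (Fin N) => x + τ • z := by fun_prop
  have h := integral_mul_le_Lp_mul_Lq_of_nonneg (μ := (volume : Measure (EuclideanSpace ℝ (Fin N))))
    hc (f := gau) (g := fun z => f (x + τ • z))
    (Filter.Eventually.of_forall fun z => (gau_pos z).le)
    (Filter.Eventually.of_forall fun z => hf0 _)
    (memLp_of_rpow hq gau_continuous.measurable (fun z => (gau_pos z).le) (gau_rpow_integrable hq))
    (memLp_of_rpow (by linarith) (hf.comp hm) (fun z => hf0 _)
      (rpow_affine_integrable hi x hτ))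
  refine h.trans (le_of_eq ?_)
  congr 1
  rw [integral_affine (fun z => f z ^ r) x hτ, Real.mul_rpow (by positivity)
    (integral_nonneg fun z => Real.rpow_nonneg (hf0 z) _)]
  congr 1
  rw [← Real.rpow_natCast, ← Real.rpow_neg hτ.le, ← Real.rpow_mul hτ.le]
  congr 1; ring

lemma gau_deriv {N : ℕ} {W : EuclideanSpace ℝ (Fin N) → ℝ} (hW : ContDiff ℝ 2 W)
    (hc : HasCompactSupport W) (x : EuclideanSpace ℝ (Fin N)) (τ : ℝ) :
    HasDerivAt (fun τ : ℝ => ∫ z, gau z * W (x + τ • z))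
      (τ * ∫ z, gau z * lap W (x + τ • z)) τ := by
  rw [← gau_ibp hW hc]
  have hW1 : ContDiff ℝ 1 W := hW.of_le (by norm_num)
  have hfc : Continuous (fderiv ℝ W) := hW1.continuous_fderiv (by norm_num)
  obtain ⟨B, hB⟩ := hfc.bounded_above_of_compact_support (hc.fderiv (𝕜 := ℝ))
  obtain ⟨B0, hB0⟩ := hW1.continuous.bounded_above_of_compact_support hc
  have hcont : ∀ τ : ℝ, Continuous fun z : EuclideanSpace ℝ (Fin N) => x + τ • z :=
    fun τ => by fun_prop
  refine (hasDerivAt_integral_of_dominated_loc_of_deriv_le (s := univ)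
    (bound := fun z => B * (‖z‖ * gau z)) (F := fun τ z => gau z * W (x + τ • z))
    (F' := fun τ z => gau z * fderiv ℝ W (x + τ • z) z) Filter.univ_mem ?_ ?_ ?_ ?_ ?_ ?_).2
  · filter_upwards with t
    exact (gau_continuous.mul (hW1.continuous.comp (hcont t))).aestronglyMeasurable
  · have := gau_integrable.bdd_mul (c := B0)
      (hW1.continuous.comp (hcont τ)).aestronglyMeasurable
      (Filter.Eventually.of_forall fun z => hB0 _)
    refine this.congr (Filter.Eventually.of_forall fun z => ?_)
    simp [mul_comm]
  · exact (gau_continuous.mul ((hfc.comp (hcont τ)).clm_apply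
      continuous_id)).aestronglyMeasurable
  · filter_upwards with z t _
    rw [norm_mul, Real.norm_of_nonneg (gau_pos z).le]
    have h1 := (fderiv ℝ W (x + t • z)).le_opNorm z
    have h2 := mul_le_mul_of_nonneg_right (hB (x + t • z)) (norm_nonneg z)
    have h3 := mul_le_mul_of_nonneg_left (h1.trans h2) (gau_pos z).le
    linarith
  · exact gau_norm_integrable.const_mul B
  · filter_upwards with z t _
    have h1 : HasDerivAt (fun t : ℝ => x + t • z) z t := by
      simpa using ((hasDerivAt_id t).smul_const z).const_add x
    have h2 := ((hW1.differentiable (by norm_num) (x + t • z)).hasFDerivAt.comp_hasDerivAt t h1)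
    exact h2.const_mul (gau z)

/-- linear sup estimate -/
lemma linear_est {N : ℕ} {r : ℝ} (hr : 1 < r) (hN : (N : ℝ) < 2 * r) : ∃ C : ℝ, 0 < C ∧
    ∀ W f : EuclideanSpace ℝ (Fin N) → ℝ, ContDiff ℝ 2 W → HasCompactSupport W → (∀ x, 0 ≤ W x) →
    Measurable f → (∀ x, 0 ≤ f x) → Integrable (fun x => f x ^ r) →
    (∀ x, -lap W x ≤ f x) → ∀ x, W x ≤ C * ((∫ z, W z) + (∫ z, f z ^ r) ^ (1 / r)) := by
  obtain ⟨κ, hκ0, hκ⟩ := gau_holder (N := N) hr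
  set b : ℝ := 2 - (N : ℝ) / r with hb
  have hr0 : 0 < r := by linarith
  have hbpos : 0 < b := by
    have : (N : ℝ) / r < 2 := by rw [div_lt_iff₀ hr0]; exact hN
    linarith
  set g0 : ℝ := ∫ z : EuclideanSpace ℝ (Fin N), gau z with hg0
  have hg0pos : 0 < g0 := by
    rw [hg0]
    unfold gau
    rw [GaussianFourier.integral_rexp_neg_mul_sq_norm (by norm_num)]
    positivity
  refine ⟨(1 + κ / b) / g0, by positivity, ?_⟩
  intro W f hW hc hW0 hf hf0 hi hlap x
  set F := (∫ z, f z ^ r) ^ (1 / r) with hF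
  have hF0 : 0 ≤ F := Real.rpow_nonneg (integral_nonneg fun z => Real.rpow_nonneg (hf0 z) _) _
  set A : ℝ → ℝ := fun τ : ℝ => ∫ z, gau z * W (x + τ • z) with hA
  have hWi : Integrable W := hW.continuous.integrable_of_hasCompactSupport hc
  have hlapc : Continuous (lap W) := by
    have hpd1 : ∀ i : Fin N, ContDiff ℝ 1 (pd i W) := fun i => by
      rw [contDiff_iff_contDiffAt]; exact fun x => pd_contDiffAt hW.contDiffAt
    have : lap W = fun x => ∑ i, pd i (pd i W) x := by funext x; rw [lap_eq]
    rw [this]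
    exact continuous_finsetSum _ fun i _ => pd_continuous (hpd1 i)
  have hlapcs : HasCompactSupport (lap W) := by
    apply HasCompactSupport.intro hc
    intro y hy
    rw [lap_eq]
    apply Finset.sum_eq_zero
    intro i _
    exact image_eq_zero_of_notMem_tsupport
      (fun h => hy (pd_tsupport W (pd_tsupport (pd i W) h)))
  obtain ⟨B, hB⟩ := hlapc.bounded_above_of_compact_support hlapcs
  have hmon : MonotoneOn (fun τ => A τ + κ * F / b * τ ^ b) (Icc 0 1) := by
    have hd : ∀ τ > 0, HasDerivAt (fun τ => A τ + κ * F / b * τ ^ b)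
        (τ * (∫ z, gau z * lap W (x + τ • z)) + κ * F / b * (b * τ ^ (b - 1))) τ := by
      intro τ hτ
      exact (gau_deriv hW hc x τ).add
        ((Real.hasDerivAt_rpow_const (Or.inl hτ.ne')).const_mul _)
    apply monotoneOn_of_deriv_nonneg (convex_Icc 0 1)
    · apply Continuous.continuousOn
      apply Continuous.add
      · exact continuous_iff_continuousAt.2 fun τ => (gau_deriv hW hc x τ).continuousAt
      · exact continuous_const.mul (continuous_id.rpow_const fun _ => Or.inr hbpos.le)
    · intro τ hτ
      rw [interior_Icc] at hτ
      exact (hd τ hτ.1).differentiableAt.differentiableWithinAt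
    · intro τ hτ
      rw [interior_Icc] at hτ
      have hτ0 := hτ.1
      rw [(hd τ hτ0).deriv]
      have h1 := hκ f hf hf0 hi x τ hτ0
      have h2 : -∫ z, gau z * f (x + τ • z) ≤ ∫ z, gau z * lap W (x + τ • z) := by
        rw [← integral_neg]
        apply integral_mono (gau_mul_integrable hr hf hf0 hi x hτ0).neg
        · have := gau_integrable.bdd_mul (c := B)
            (hlapc.comp (by fun_prop : Continuous fun z : EuclideanSpace ℝ (Fin N) =>
              x + τ • z)).aestronglyMeasurable
            (Filter.Eventually.of_forall fun z => hB _)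
          refine this.congr (Filter.Eventually.of_forall fun z => ?_)
          simp [mul_comm]
        · intro z
          have := hlap (x + τ • z)
          have h3 := gau_pos z
          simp only [Pi.neg_apply]
          nlinarith
      have h3 : τ * τ ^ (-(N : ℝ) / r) = τ ^ (b - 1) := by
        conv_lhs => rw [← Real.rpow_one τ, ← Real.rpow_mul hτ0.le, ← Real.rpow_add hτ0]
        congr 1; rw [hb]; ring
      have h4 : κ * F / b * (b * τ ^ (b - 1)) = κ * F * τ ^ (b - 1) := by
        field_simp
      rw [h4, ← h3]
      have h5 := mul_le_mul_of_nonneg_left (h1) hτ0.le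
      have h6 := mul_le_mul_of_nonneg_left (h2) hτ0.le
      nlinarith
  have h01 := hmon (left_mem_Icc.2 zero_le_one) (right_mem_Icc.2 zero_le_one) zero_le_one
  simp only at h01
  rw [Real.zero_rpow hbpos.ne', Real.one_rpow] at h01
  have hA0 : A 0 = W x * g0 := by
    simp only [hA, zero_smul, add_zero]
    rw [integral_mul_const, mul_comm]
  have hA1 : A 1 ≤ ∫ z, W z := by
    have e : ∫ z, W z = ∫ z, W (x + (1 : ℝ) • z) := by
      simp only [one_smul]
      rw [integral_add_left_eq_self]
    rw [e]
    apply integral_mono_of_nonneg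
    · exact Filter.Eventually.of_forall fun z => mul_nonneg (gau_pos z).le (hW0 _)
    · exact rpow_affine_integrable hWi x one_pos
    · exact Filter.Eventually.of_forall fun z => by
        have := gau_le_one z
        have := hW0 (x + (1 : ℝ) • z)
        simp only
        nlinarith
  have hIW : 0 ≤ ∫ z, W z := integral_nonneg hW0
  have hkb : 0 ≤ κ / b := by positivity
  have h7 : W x * g0 ≤ (1 + κ / b) * ((∫ z, W z) + F) := by
    have : κ * F / b = κ / b * F := by ring
    rw [hA0, this] at h01
    nlinarith [mul_nonneg hkb hIW]
  rw [div_mul_eq_mul_div, le_div_iff₀ hg0pos]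
  exact h7

/-- bundle of the hypotheses on a solution for a fixed parameter -/
structure Sol {N : ℕ} (Ω : Set (EuclideanSpace ℝ (Fin N))) (p θ σ lam : ℝ)
    (u v : EuclideanSpace ℝ (Fin N) → ℝ) : Prop where
  ho : IsOpen Ω
  hbd : Bornology.IsBounded Ω
  hu2 : ContDiffOn ℝ 2 u Ω
  hv2 : ContDiffOn ℝ 2 v Ω
  huc : ContinuousOn u (closure Ω)
  hvc : ContinuousOn v (closure Ω)
  hu : ∀ x ∈ Ω, 0 < u x
  hv : ∀ x ∈ Ω, 0 < v x
  hub : ∀ x ∈ frontier Ω, u x = 0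
  hvb : ∀ x ∈ frontier Ω, v x = 0
  equ : ∀ x ∈ Ω, -lap u x = lam * (v x + 1) ^ p
  eqv : ∀ x ∈ Ω, -lap v x = σ * lam * (u x + 1) ^ θ
  st : IsStable Ω lam (σ * lam) p θ u v

lemma nonneg_closure {N : ℕ} {Ω : Set (EuclideanSpace ℝ (Fin N))} (ho : IsOpen Ω)
    {w : EuclideanSpace ℝ (Fin N) → ℝ} (hw : ∀ x ∈ Ω, 0 < w x) (hb : ∀ x ∈ frontier Ω, w x = 0) :
    ∀ x ∈ closure Ω, 0 ≤ w x := by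
  intro x hx
  by_cases h : x ∈ Ω
  · exact (hw x h).le
  · exact (hb x (by rw [ho.frontier_eq]; exact ⟨hx, h⟩)).ge

/-- comparison principle -/
lemma comparison {N : ℕ} {Ω : Set (EuclideanSpace ℝ (Fin N))} {p θ σ lam : ℝ}
    {u v : EuclideanSpace ℝ (Fin N) → ℝ} (S : Sol Ω p θ σ lam u v) (hp : 1 < p) (hpθ : p ≤ θ)
    (hlam : 0 < lam) {c : ℝ} (hc0 : 0 < c) (hc1 : c ≤ 1)
    (hcσ : c * ((θ + 1) / (p + 1)) < σ) :
    ∀ x ∈ Ω, c * (u x + 1) ^ ((θ + 1) / (p + 1)) ≤ v x + 1 := by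
  set α := (θ + 1) / (p + 1) with hα
  have hα1 : 1 ≤ α := by rw [hα, le_div_iff₀ (by linarith)]; linarith
  have hθ : θ = α * p + (α - 1) := by rw [hα]; field_simp; ring
  by_contra! hcon
  obtain ⟨x1, hx1, hx1'⟩ := hcon
  have hu0 := nonneg_closure S.ho S.hu S.hub
  have hv0 := nonneg_closure S.ho S.hv S.hvb
  have hcont : ContinuousOn (fun x => c * (u x + 1) ^ α - (v x + 1)) (closure Ω) := by
    apply ContinuousOn.sub
    · apply continuousOn_const.mul
      apply ContinuousOn.rpow_const (S.huc.add continuousOn_const)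
      intro x hx
      left
      have := hu0 x hx
      exact (show (0 : ℝ) < u x + 1 by linarith).ne'
    · exact S.hvc.add continuousOn_const
  obtain ⟨x, hx, hmax⟩ := S.hbd.isCompact_closure.exists_isMaxOn ⟨x1, subset_closure hx1⟩ hcont
  have hpos : 0 < c * (u x + 1) ^ α - (v x + 1) := by
    have := hmax (subset_closure hx1)
    simp only [mem_ofPred_eq] at this
    linarith
  have hxΩ : x ∈ Ω := by
    by_contra h
    have hf : x ∈ frontier Ω := by rw [S.ho.frontier_eq]; exact ⟨hx, h⟩
    rw [S.hub x hf, S.hvb x hf] at hpos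
    simp at hpos
    linarith
  have hnh : Ω ∈ nhds x := S.ho.mem_nhds hxΩ
  have hua : ContDiffAt ℝ 2 u x := S.hu2.contDiffAt hnh
  have hva : ContDiffAt ℝ 2 v x := S.hv2.contDiffAt hnh
  have hUpos : 0 < u x + 1 := by linarith [S.hu x hxΩ]
  have hVpos : 0 < v x + 1 := by linarith [S.hv x hxΩ]
  have hUa : ContDiffAt ℝ 2 (fun y => (u y + 1) ^ α) x :=
    (hua.add contDiffAt_const).rpow_const_of_ne hUpos.ne'
  have hVa : ContDiffAt ℝ 2 (fun y => v y + 1) x := hva.add contDiffAt_const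
  have hlm : IsLocalMax (fun x => c * (u x + 1) ^ α - (v x + 1)) x :=
    hmax.isLocalMax (Filter.mem_of_superset hnh subset_closure)
  have hle := lap_nonpos_of_isLocalMax ((contDiffAt_const.mul hUa).sub hVa) hlm
  rw [lap_sub_smul hUa hVa] at hle
  have e1 : lap (fun y => (u y + 1) ^ α) x =
      (α * (u x + 1) ^ (α - 1)) * lap u x +
        (α * ((α - 1) * (u x + 1) ^ (α - 1 - 1))) * ∑ i : Fin N, (pd i u x) ^ 2 := by
    have h1 : ∀ t : ℝ, 0 < t + 1 → ∀ β : ℝ,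
        HasDerivAt (fun t : ℝ => (t + 1) ^ β) (β * (t + 1) ^ (β - 1)) t := by
      intro t ht β
      have := ((hasDerivAt_id t).add_const (1 : ℝ)).rpow_const (p := β) (Or.inl ht.ne')
      simpa using this
    apply lap_comp (G := fun t : ℝ => (t + 1) ^ α) (g := fun t : ℝ => α * (t + 1) ^ (α - 1)) hua
    · filter_upwards [lt_mem_nhds (show -1 < u x by linarith)] with t ht
      exact h1 t (by linarith) α
    · exact (h1 (u x) hUpos (α - 1)).const_mul α
  have e2 : lap (fun y => v y + 1) x = lap v x := by
    have := lap_comp (G := fun t : ℝ => t + 1) (g := fun _ => 1) (g' := 0) hva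
      (Filter.Eventually.of_forall fun t => (hasDerivAt_id t).add_const 1)
      (hasDerivAt_const _ _)
    simpa using this
  rw [e1, e2] at hle
  have hS : 0 ≤ ∑ i : Fin N, (pd i u x) ^ 2 := Finset.sum_nonneg fun i _ => sq_nonneg _
  have hX : 0 ≤ c * ((α * ((α - 1) * (u x + 1) ^ (α - 1 - 1))) * ∑ i : Fin N, (pd i u x) ^ 2) := by
    have : 0 ≤ α - 1 := by linarith
    positivity
  have hu' : lap u x = -(lam * (v x + 1) ^ p) := by linarith [S.equ x hxΩ]
  have hv' : lap v x = -(σ * lam * (u x + 1) ^ θ) := by linarith [S.eqv x hxΩ]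
  rw [hu', hv'] at hle
  have hUθ : (u x + 1) ^ θ = ((u x + 1) ^ α) ^ p * (u x + 1) ^ (α - 1) := by
    rw [← Real.rpow_mul hUpos.le, ← Real.rpow_add hUpos, ← hθ]
  have hVp : (v x + 1) ^ p ≤ ((u x + 1) ^ α) ^ p := by
    apply Real.rpow_le_rpow hVpos.le _ (by linarith)
    have : 0 < (u x + 1) ^ α := by positivity
    nlinarith
  rw [hUθ] at hle
  set a := (u x + 1) ^ (α - 1) with ha
  have ha0 : 0 < a := by positivity
  set b := ((u x + 1) ^ α) ^ p with hb
  have hb0 : 0 < b := by positivity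
  set d := (v x + 1) ^ p with hd
  have hd0 : 0 < d := by positivity
  have k1 : c * α * d < σ * b := by
    have : c * α * d ≤ c * α * b := by gcongr
    nlinarith
  have k2 : 0 < lam * a * (σ * b - c * α * d) := by
    apply mul_pos (mul_pos hlam ha0); linarith
  nlinarith

/-- smooth cutoff -/
def chi (t : ℝ) : ℝ := Real.smoothTransition (t - 1)

lemma chi_contDiff {n : ℕ∞} : ContDiff ℝ n chi :=
  Real.smoothTransition.contDiff.comp (contDiff_id.sub contDiff_const)

lemma chi_continuous : Continuous chi := (chi_contDiff (n := 0)).continuous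

lemma chi_nonneg (t : ℝ) : 0 ≤ chi t := Real.smoothTransition.nonneg _

lemma chi_le_one (t : ℝ) : chi t ≤ 1 := Real.smoothTransition.le_one _

lemma chi_zero {t : ℝ} (h : t ≤ 1) : chi t = 0 :=
  Real.smoothTransition.zero_of_nonpos (by linarith)

lemma chi_one {t : ℝ} (h : 2 ≤ t) : chi t = 1 :=
  Real.smoothTransition.one_of_one_le (by linarith)

/-- truncated derivative of a power -/
def gm (m t : ℝ) : ℝ := m * (max (1 + t) 1) ^ (m - 1) * chi t

lemma gm_continuous (m : ℝ) : Continuous (gm m) := by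
  unfold gm
  apply Continuous.mul _ chi_continuous
  apply continuous_const.mul
  apply Continuous.rpow_const
  · fun_prop
  · intro t
    left
    have := le_max_right (1 + t) (1 : ℝ)
    linarith

lemma gm_zero (m : ℝ) : ∀ t ≤ 1, gm m t = 0 := fun t ht => by simp [gm, chi_zero ht]

lemma gm_nonneg {m : ℝ} (hm : 0 ≤ m) (t : ℝ) : 0 ≤ gm m t := by
  unfold gm
  have h1 : 0 ≤ max (1 + t) 1 := le_trans zero_le_one (le_max_right _ _)
  have := chi_nonneg t
  positivity

lemma prim_nonneg {g : ℝ → ℝ} (hg : ∀ t, 0 ≤ g t) {t : ℝ} (ht : 0 ≤ t) : 0 ≤ prim g t :=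
  intervalIntegral.integral_nonneg ht fun _ _ => hg _

lemma one_add_rpow_hasDerivAt {t : ℝ} (ht : 0 < 1 + t) (β : ℝ) :
    HasDerivAt (fun t : ℝ => (1 + t) ^ β) (β * (1 + t) ^ (β - 1)) t := by
  have := ((hasDerivAt_id t).const_add (1 : ℝ)).rpow_const (p := β) (Or.inl ht.ne')
  simpa using this

lemma prim_gm_lower {m : ℝ} (hm : 1 < m) {t : ℝ} (ht : 0 ≤ t) :
    (1 + t) ^ m - 3 ^ m ≤ prim (gm m) t := by
  have hnn : ∀ t, 0 ≤ t → 0 ≤ prim (gm m) t := fun t ht => prim_nonneg (gm_nonneg (by linarith)) ht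
  rcases le_total t 2 with h | h
  · have : (1 + t) ^ m ≤ 3 ^ m := Real.rpow_le_rpow (by linarith) (by linarith) (by linarith)
    linarith [hnn t ht]
  · have hd : ∀ t ∈ Ici (2 : ℝ), HasDerivAt (fun t => prim (gm m) t - (1 + t) ^ m) 0 t := by
      intro t ht
      rw [mem_Ici] at ht
      have h1 := (prim_hasDerivAt (gm_continuous m) t).sub
        (one_add_rpow_hasDerivAt (t := t) (by linarith) m)
      have : gm m t - m * (1 + t) ^ (m - 1) = 0 := by
        unfold gm
        rw [chi_one ht, max_eq_left (by linarith)]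
        ring
      rw [this] at h1
      exact h1
    have hmon : MonotoneOn (fun t => prim (gm m) t - (1 + t) ^ m) (Ici 2) := by
      apply monotoneOn_of_deriv_nonneg (convex_Ici 2)
      · exact fun t ht => (hd t ht).continuousAt.continuousWithinAt
      · exact fun t ht => (hd t (interior_subset ht)).differentiableAt.differentiableWithinAt
      · exact fun t ht => (hd t (interior_subset ht)).deriv.ge
    have h2 := hmon (mem_Ici.2 le_rfl) (mem_Ici.2 h) h
    simp only at h2
    have h3 := hnn 2 (by norm_num)
    norm_num at h2
    linarith

lemma prim_gm_sq_upper {m : ℝ} (hm : 1 < m) {t : ℝ} (ht : 0 ≤ t) :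
    prim (fun t => gm m t ^ 2) t ≤ m ^ 2 / (2 * m - 1) * (1 + t) ^ (2 * m - 1) := by
  have hm2 : 0 < 2 * m - 1 := by linarith
  have hd : ∀ t ∈ Ici (0 : ℝ), HasDerivAt
      (fun t => m ^ 2 / (2 * m - 1) * (1 + t) ^ (2 * m - 1) - prim (fun t => gm m t ^ 2) t)
      (m ^ 2 / (2 * m - 1) * ((2 * m - 1) * (1 + t) ^ (2 * m - 1 - 1)) - gm m t ^ 2) t := by
    intro t ht
    rw [mem_Ici] at ht
    exact ((one_add_rpow_hasDerivAt (t := t) (by linarith) _).const_mul _).sub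
      (prim_hasDerivAt ((gm_continuous m).pow 2) t)
  have hmon : MonotoneOn
      (fun t => m ^ 2 / (2 * m - 1) * (1 + t) ^ (2 * m - 1) - prim (fun t => gm m t ^ 2) t)
      (Ici 0) := by
    apply monotoneOn_of_deriv_nonneg (convex_Ici 0)
    · exact fun t ht => (hd t ht).continuousAt.continuousWithinAt
    · exact fun t ht => (hd t (interior_subset ht)).differentiableAt.differentiableWithinAt
    · intro t ht
      have ht0 : 0 ≤ t := interior_subset ht
      rw [(hd t (interior_subset ht)).deriv]
      have h1 : m ^ 2 / (2 * m - 1) * ((2 * m - 1) * (1 + t) ^ (2 * m - 1 - 1)) =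
          (m * (1 + t) ^ (m - 1)) ^ 2 := by
        rw [mul_pow, ← Real.rpow_natCast ((1 + t) ^ (m - 1)), ← Real.rpow_mul (by linarith)]
        have : (m - 1) * ((2 : ℕ) : ℝ) = 2 * m - 1 - 1 := by push_cast; ring
        rw [this, ← mul_assoc, div_mul_cancel₀ _ hm2.ne']
      rw [h1]
      unfold gm
      rw [max_eq_left (by linarith)]
      have h2 : 0 ≤ m * (1 + t) ^ (m - 1) := by positivity
      have h3 := chi_nonneg t
      have h4 := chi_le_one t
      have h5 : m * (1 + t) ^ (m - 1) * chi t ≤ m * (1 + t) ^ (m - 1) :=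
        mul_le_of_le_one_right h2 h4
      have h6 : 0 ≤ m * (1 + t) ^ (m - 1) * chi t := mul_nonneg h2 h3
      nlinarith
  have h := hmon (mem_Ici.2 le_rfl) (mem_Ici.2 ht) ht
  simp only [prim, intervalIntegral.integral_same, add_zero, Real.one_rpow] at h
  have : 0 ≤ m ^ 2 / (2 * m - 1) := by positivity
  unfold prim
  linarith

lemma intOn {N : ℕ} {Ω : Set (EuclideanSpace ℝ (Fin N))} (hbd : Bornology.IsBounded Ω)
    {f : EuclideanSpace ℝ (Fin N) → ℝ} (hf : ContinuousOn f (closure Ω)) : IntegrableOn f Ω :=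
  (hf.integrableOn_compact hbd.isCompact_closure).mono_set subset_closure

lemma contOn_rpow {N : ℕ} {Ω : Set (EuclideanSpace ℝ (Fin N))} (ho : IsOpen Ω)
    {w : EuclideanSpace ℝ (Fin N) → ℝ} (hw : ContinuousOn w (closure Ω)) (hw0 : ∀ x ∈ Ω, 0 < w x)
    (hb : ∀ x ∈ frontier Ω, w x = 0) (m : ℝ) :
    ContinuousOn (fun x => (w x + 1) ^ m) (closure Ω) := by
  apply ContinuousOn.rpow_const (hw.add continuousOn_const)
  intro x hx
  left
  have := nonneg_closure ho hw0 hb x hx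
  exact (show (0 : ℝ) < w x + 1 by linarith).ne'

lemma stab_ineq {N : ℕ} {Ω : Set (EuclideanSpace ℝ (Fin N))} {p θ σ lam : ℝ}
    {u v : EuclideanSpace ℝ (Fin N) → ℝ} (S : Sol Ω p θ σ lam u v)
    {w k : EuclideanSpace ℝ (Fin N) → ℝ} (hw2 : ContDiffOn ℝ 2 w Ω)
    (hwc : ContinuousOn w (closure Ω)) (hw0 : ∀ x ∈ Ω, 0 < w x)
    (hwb : ∀ x ∈ frontier Ω, w x = 0) (hk : ContinuousOn k (closure Ω))
    (hk0 : ∀ x ∈ Ω, 0 ≤ k x) (hlap : ∀ x ∈ Ω, -lap w x = k x) {m : ℝ} (hm : 1 < m) :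
    Real.sqrt (lam * (σ * lam) * p * θ) *
      ∫ x in Ω, (v x + 1) ^ ((p - 1) / 2) * (u x + 1) ^ ((θ - 1) / 2) * prim (gm m) (w x) ^ 2
    ≤ m ^ 2 / (2 * m - 1) * ∫ x in Ω, k x * (w x + 1) ^ (2 * m - 1) := by
  have hwgt : IntegrableOn (fun x => (v x + 1) ^ ((p - 1) / 2) * (u x + 1) ^ ((θ - 1) / 2)) Ω :=
    intOn S.hbd ((contOn_rpow S.ho S.hvc S.hv S.hvb _).mul (contOn_rpow S.ho S.huc S.hu S.hub _))
  have hz : ∀ t < 1, prim (gm m) t = 0 := prim_zero (gm_zero m)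
  have h := stable_C1 S.ho S.hbd S.st S.hu S.hv hwgt
    (φ := ext0 Ω (prim (gm m)) w)
    (ext0_contDiff hwc hwb S.ho hz (prim_contDiff (gm_continuous m)) (hw2.of_le (by norm_num)))
    (ext0_compact S.hbd) (ext0_tsupport hwc hwb S.ho hz)
  rw [energy S.ho S.hbd hw2 hwc hwb (gm_continuous m) (gm_zero m)] at h
  have e1 : ∫ x in Ω, (v x + 1) ^ ((p - 1) / 2) * (u x + 1) ^ ((θ - 1) / 2) *
      ext0 Ω (prim (gm m)) w x ^ 2 =
      ∫ x in Ω, (v x + 1) ^ ((p - 1) / 2) * (u x + 1) ^ ((θ - 1) / 2) * prim (gm m) (w x) ^ 2 := by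
    apply setIntegral_congr_fun S.ho.measurableSet
    intro x hx
    simp [ext0, hx]
  rw [e1] at h
  refine h.trans ?_
  rw [← integral_const_mul]
  have hpc : Continuous (prim fun t => gm m t ^ 2) :=
    (prim_contDiff ((gm_continuous m).pow 2)).continuous
  have e2 : ∫ x in Ω, -lap w x * prim (fun t => gm m t ^ 2) (w x) =
      ∫ x in Ω, k x * prim (fun t => gm m t ^ 2) (w x) := by
    apply setIntegral_congr_fun S.ho.measurableSet
    intro x hx
    simp only [hlap x hx]
  rw [e2]
  apply setIntegral_mono_on
  · exact intOn S.hbd (hk.mul (hpc.comp_continuousOn hwc))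
  · exact intOn S.hbd (continuousOn_const.mul (hk.mul (contOn_rpow S.ho hwc hw0 hwb _)))
  · exact S.ho.measurableSet
  · intro x hx
    have h1 := prim_gm_sq_upper hm (hw0 x hx).le
    have h2 := mul_le_mul_of_nonneg_left h1 (hk0 x hx)
    rw [add_comm 1 (w x)] at h2
    linarith

lemma young_pair {κ A B : ℝ} (hκ0 : 0 < κ) (hκ1 : κ < 1) (hA : 0 < A) (hB : 0 < B)
    (hAB : A * B ≤ 1) : ∃ μ : ℝ, 0 < μ ∧ ∀ x y : ℝ, 0 ≤ x → 0 ≤ y →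
    μ * (A * (x ^ (1 - κ) * y ^ κ)) + B * (y ^ (1 - κ) * x ^ κ) ≤ μ * x + y := by
  have hμ : 0 < A ^ (-(1 / κ)) := by positivity
  refine ⟨A ^ (-(1 / κ)), hμ, ?_⟩
  intro x y hx hy
  set μ := A ^ (-(1 / κ)) with hμd
  have hμκ : μ ^ κ = A⁻¹ := by
    rw [hμd, ← Real.rpow_mul hA.le]
    have : -(1 / κ) * κ = -1 := by field_simp
    rw [this, Real.rpow_neg_one]
  have hμ1 : μ = μ ^ (1 - κ) * μ ^ κ := by
    rw [← Real.rpow_add hμ]; simp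
  have h1 : μ * (A * (x ^ (1 - κ) * y ^ κ)) = (μ * x) ^ (1 - κ) * y ^ κ := by
    rw [Real.mul_rpow hμ.le hx]
    conv_lhs => rw [hμ1, hμκ]
    field_simp
  have h2 : B * (y ^ (1 - κ) * x ^ κ) = (A * B) * ((μ * x) ^ κ * y ^ (1 - κ)) := by
    rw [Real.mul_rpow hμ.le hx, hμκ]
    field_simp
  have hX : 0 ≤ μ * x := by positivity
  have k1 := Real.geom_mean_le_arith_mean2_weighted (w₁ := 1 - κ) (w₂ := κ) (by linarith) hκ0.le
    hX hy (by ring)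
  have k2 := Real.geom_mean_le_arith_mean2_weighted (w₁ := κ) (w₂ := 1 - κ) hκ0.le (by linarith)
    hX hy (by ring)
  have k3 : (A * B) * ((μ * x) ^ κ * y ^ (1 - κ)) ≤ (μ * x) ^ κ * y ^ (1 - κ) :=
    mul_le_of_le_one_left (by positivity) hAB
  rw [h1, h2]
  linarith

lemma sq_trunc {m : ℝ} (hm : 1 < m) {ε : ℝ} (hε : 0 < ε) {t : ℝ} (ht : 0 ≤ t) :
    (t + 1) ^ (2 * m) ≤ (1 + ε) * prim (gm m) t ^ 2 + (1 + 1 / ε) * (3 ^ m) ^ 2 := by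
  have h1 := prim_gm_lower hm ht
  have h2 : 0 ≤ prim (gm m) t := prim_nonneg (gm_nonneg (by linarith)) ht
  have h3 : (t + 1) ^ (2 * m) = ((1 + t) ^ m) ^ 2 := by
    rw [← Real.rpow_natCast ((1 + t) ^ m), ← Real.rpow_mul (by linarith), add_comm t 1]
    congr 1; push_cast; ring
  rw [h3]
  set a := prim (gm m) t
  set b : ℝ := 3 ^ m
  have hb : 0 < b := by positivity
  have h4 : ((1 + t) ^ m) ^ 2 ≤ (a + b) ^ 2 := by
    have : 0 ≤ (1 + t) ^ m := by positivity
    gcongr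
    linarith
  have h5 : (1 + ε) * a ^ 2 + (1 + 1 / ε) * b ^ 2 - (a + b) ^ 2 = (ε * a - b) ^ 2 / ε := by
    field_simp; ring
  have h6 : 0 ≤ (ε * a - b) ^ 2 / ε := by positivity
  linarith

/-- absorption of lower order terms -/
lemma absorb {a b m n μ K η : ℝ} (ha : 0 ≤ a) (hb : 0 ≤ b) (hm : 0 < m) (hn : 0 < n)
    (hμ : 0 < μ) (hK : 0 < K) (hη : 0 < η) : ∃ C : ℝ, 0 ≤ C ∧ ∀ U V : ℝ, 1 ≤ U → 1 ≤ V →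
    V ^ a * U ^ b * K ≤ η * (V ^ a * U ^ b * (μ * U ^ m + V ^ n)) + C := by
  set R := K / η with hR
  have hR0 : 0 < R := by positivity
  refine ⟨(R ^ (1 / n)) ^ a * ((R / μ) ^ (1 / m)) ^ b * K, by positivity, ?_⟩
  intro U V hU hV
  have hU0 : 0 < U := by linarith
  have hV0 : 0 < V := by linarith
  have hω : 0 < V ^ a * U ^ b := by positivity
  rcases le_total R (μ * U ^ m + V ^ n) with h | h
  · have h1 : K ≤ η * (μ * U ^ m + V ^ n) := by
      have : K = η * R := by rw [hR]; field_simp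
      rw [this]; gcongr
    have h2 := mul_le_mul_of_nonneg_left h1 hω.le
    have h3 : 0 ≤ (R ^ (1 / n)) ^ a * ((R / μ) ^ (1 / m)) ^ b * K := by positivity
    linarith
  · have hUm : 0 < U ^ m := by positivity
    have hVn : 0 < V ^ n := by positivity
    have h1 : U ≤ (R / μ) ^ (1 / m) := by
      have : U ^ m ≤ R / μ := by rw [le_div_iff₀ hμ]; linarith
      have h2 := Real.rpow_le_rpow hUm.le this (by positivity : 0 ≤ 1 / m)
      rwa [← Real.rpow_mul hU0.le, mul_one_div_cancel hm.ne', Real.rpow_one] at h2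
    have h2 : V ≤ R ^ (1 / n) := by
      have : V ^ n ≤ R := by nlinarith [mul_pos hμ hUm]
      have h2 := Real.rpow_le_rpow hVn.le this (by positivity : 0 ≤ 1 / n)
      rwa [← Real.rpow_mul hV0.le, mul_one_div_cancel hn.ne', Real.rpow_one] at h2
    have h3 : V ^ a * U ^ b * K ≤ (R ^ (1 / n)) ^ a * ((R / μ) ^ (1 / m)) ^ b * K := by
      gcongr
    have h4 : 0 ≤ η * (V ^ a * U ^ b * (μ * U ^ m + V ^ n)) := by positivity
    linarith

/-- the main integral estimate -/
lemma int_est {N : ℕ} (Ω : Set (EuclideanSpace ℝ (Fin N))) {p θ σ s : ℝ} (hp : 1 < p)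
    (hpθ : p ≤ θ) (hσ : 0 < σ) (hs : p + 1 < s) (hq : qq p θ s < 0) : ∃ C : ℝ, 0 ≤ C ∧
    ∀ (lam : ℝ) (u v : EuclideanSpace ℝ (Fin N) → ℝ), 0 < lam → Sol Ω p θ σ lam u v →
    ∫ x in Ω, (v x + 1) ^ ((p - 1) / 2) * (u x + 1) ^ ((θ - 1) / 2) *
      (u x + 1) ^ ((θ + 1) / (p + 1) * s) ≤ C ∧
    ∫ x in Ω, (v x + 1) ^ ((p - 1) / 2) * (u x + 1) ^ ((θ - 1) / 2) * (v x + 1) ^ s ≤ C := by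
  set α := (θ + 1) / (p + 1) with hα
  have hα1 : 1 ≤ α := by rw [hα, le_div_iff₀ (by linarith)]; linarith
  have hα0 : 0 < α := by linarith
  have hθ1 : 1 < θ := by linarith
  have hs2 : 2 < s := by linarith
  have hs0 : 0 < s := by linarith
  have hαs : s ≤ α * s := by nlinarith
  set m := α * s / 2 with hm
  set n := s / 2 with hn
  have hm1 : 1 < m := by rw [hm]; linarith
  have hn1 : 1 < n := by rw [hn]; linarith
  have h2m : 2 * m = α * s := by rw [hm]; ring
  have h2n : 2 * n = s := by rw [hn]; ring
  set R := Real.sqrt (σ * p * θ) with hR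
  have hR2 : R ^ 2 = σ * p * θ := Real.sq_sqrt (by positivity)
  have hR0 : 0 < R := Real.sqrt_pos.2 (by positivity)
  set A := m ^ 2 / (2 * m - 1) / R with hA
  set B := σ * (n ^ 2 / (2 * n - 1)) / R with hB
  have hm2 : 0 < 2 * m - 1 := by linarith
  have hn2 : 0 < 2 * n - 1 := by linarith
  have hA0 : 0 < A := by positivity
  have hB0 : 0 < B := by positivity
  have hAB : A * B < 1 := by
    have e : A * B = α ^ 2 * s ^ 4 / (16 * p * θ * ((α * s - 1) * (s - 1))) := by
      have k1 : A * B = m ^ 2 * n ^ 2 * σ / ((2 * m - 1) * (2 * n - 1) * R ^ 2) := by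
        rw [hA, hB]; field_simp
      have k2 : 0 < α * s - 1 := by linarith
      have k3 : 0 < s - 1 := by linarith
      rw [k1, hR2, h2m, h2n, hm, hn]
      rw [div_eq_div_iff (by positivity) (by positivity)]
      ring
    have k2 : 0 < α * s - 1 := by linarith
    have k3 : 0 < s - 1 := by linarith
    rw [e, div_lt_one (by positivity)]
    unfold qq at hq
    rw [← hα] at hq
    have k4 : (p + 1) / (θ + 1) = 1 / α := by rw [hα, one_div_div]
    rw [k4] at hq
    have k5 : α ^ 2 * (s ^ 4 - 16 * p * θ * (1 / α) ^ 2 * (α * s - 1) * (s - 1)) < 0 :=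
      mul_neg_of_pos_of_neg (by positivity) hq
    have k6 : α ^ 2 * (s ^ 4 - 16 * p * θ * (1 / α) ^ 2 * (α * s - 1) * (s - 1)) =
        α ^ 2 * s ^ 4 - 16 * p * θ * ((α * s - 1) * (s - 1)) := by
      field_simp
    linarith
  have hAB0 : 0 < A * B := by positivity
  set t := Real.sqrt (1 / (A * B)) with ht
  have ht2 : t ^ 2 = 1 / (A * B) := Real.sq_sqrt (by positivity)
  have ht1 : 1 < t := by
    rw [ht, Real.lt_sqrt (by norm_num), one_pow, lt_div_iff₀ hAB0]; linarith
  have ht0 : 0 < t := by linarith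
  have htAB : (t * A) * (t * B) ≤ 1 := by
    have : (t * A) * (t * B) = t ^ 2 * (A * B) := by ring
    rw [this, ht2, one_div, inv_mul_cancel₀ hAB0.ne']
  set κ := (p + 1) / (2 * s) with hκ
  have hκ0 : 0 < κ := by rw [hκ]; apply div_pos <;> linarith
  have hκ1 : κ < 1 := by rw [hκ, div_lt_one (by linarith)]; linarith
  obtain ⟨μ, hμ0, hμ⟩ := young_pair hκ0 hκ1 (mul_pos ht0 hA0) (mul_pos ht0 hB0) htAB
  set ε := (t - 1) / 2 with hε
  have hε0 : 0 < ε := by rw [hε]; linarith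
  set q := (1 + ε) / t with hqd
  have hq1 : q < 1 := by rw [hqd, div_lt_one ht0]; rw [hε]; linarith
  set η := (1 - q) / 2 with hη
  have hη0 : 0 < η := by rw [hη]; linarith
  set K := μ * ((1 + 1 / ε) * (3 ^ m) ^ 2) + (1 + 1 / ε) * (3 ^ n) ^ 2 with hK
  have hK0 : 0 < K := by positivity
  obtain ⟨C', hC'0, hC'⟩ := absorb (a := (p - 1) / 2) (b := (θ - 1) / 2) (m := 2 * m) (n := 2 * n)
    (by linarith) (by linarith) (by linarith) (by linarith) hμ0 hK0 hη0
  set D := C' * volume.real Ω / η with hD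
  have hD0 : 0 ≤ D := by positivity
  have key : ∀ (lam : ℝ) (u v : EuclideanSpace ℝ (Fin N) → ℝ), 0 < lam → Sol Ω p θ σ lam u v →
      ∫ x in Ω, (v x + 1) ^ ((p - 1) / 2) * (u x + 1) ^ ((θ - 1) / 2) *
        (μ * (u x + 1) ^ (2 * m) + (v x + 1) ^ (2 * n)) ≤ D := by
    intro lam u v hlam S
    have hms := S.ho.measurableSet
    have hcu := fun e => contOn_rpow S.ho S.huc S.hu S.hub e
    have hcv := fun e => contOn_rpow S.ho S.hvc S.hv S.hvb e
    have hsq : Real.sqrt (lam * (σ * lam) * p * θ) = lam * R := by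
      rw [hR, show lam * (σ * lam) * p * θ = lam ^ 2 * (σ * p * θ) by ring,
        Real.sqrt_mul (by positivity), Real.sqrt_sq hlam.le]
    have iu := stab_ineq S S.hu2 S.huc S.hu S.hub (k := fun x => lam * (v x + 1) ^ p)
      (continuousOn_const.mul (hcv p))
      (fun x hx => by have := S.hv x hx; positivity) S.equ hm1
    have iv := stab_ineq S S.hv2 S.hvc S.hv S.hvb (k := fun x => σ * lam * (u x + 1) ^ θ)
      (continuousOn_const.mul (hcu θ))
      (fun x hx => by have := S.hu x hx; positivity) S.eqv hn1
    rw [hsq] at iu iv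
    set ω : EuclideanSpace ℝ (Fin N) → ℝ :=
      fun x => (v x + 1) ^ ((p - 1) / 2) * (u x + 1) ^ ((θ - 1) / 2) with hω
    have hωc : ContinuousOn ω (closure Ω) := (hcv _).mul (hcu _)
    have hω0 : ∀ x ∈ Ω, 0 ≤ ω x := fun x hx => by
      have := S.hu x hx
      have := S.hv x hx
      simp only [hω]; positivity
    have hpu : ContinuousOn (fun x => ω x * prim (gm m) (u x) ^ 2) (closure Ω) :=
      hωc.mul (((prim_contDiff (gm_continuous m)).continuous.comp_continuousOn S.huc).pow 2)
    have hpv : ContinuousOn (fun x => ω x * prim (gm n) (v x) ^ 2) (closure Ω) :=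
      hωc.mul (((prim_contDiff (gm_continuous n)).continuous.comp_continuousOn S.hvc).pow 2)
    set Iu := ∫ x in Ω, ω x * prim (gm m) (u x) ^ 2 with hIu
    set Iv := ∫ x in Ω, ω x * prim (gm n) (v x) ^ 2 with hIv
    set P : EuclideanSpace ℝ (Fin N) → ℝ :=
      fun x => ω x * (μ * (u x + 1) ^ (2 * m) + (v x + 1) ^ (2 * n)) with hP
    have hPc : ContinuousOn P (closure Ω) :=
      hωc.mul ((continuousOn_const.mul (hcu _)).add (hcv _))
    have hJ1 : ContinuousOn (fun x => (v x + 1) ^ p * (u x + 1) ^ (2 * m - 1)) (closure Ω) :=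
      (hcv _).mul (hcu _)
    have hJ2 : ContinuousOn (fun x => (u x + 1) ^ θ * (v x + 1) ^ (2 * n - 1)) (closure Ω) :=
      (hcu _).mul (hcv _)
    have iu' : Iu ≤ A * ∫ x in Ω, (v x + 1) ^ p * (u x + 1) ^ (2 * m - 1) := by
      have e : ∫ x in Ω, lam * (v x + 1) ^ p * (u x + 1) ^ (2 * m - 1) =
          lam * ∫ x in Ω, (v x + 1) ^ p * (u x + 1) ^ (2 * m - 1) := by
        rw [← integral_const_mul]; simp only [mul_assoc]
      rw [e] at iu
      set J := ∫ x in Ω, (v x + 1) ^ p * (u x + 1) ^ (2 * m - 1)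
      have h1 : lam * (R * Iu) ≤ lam * (m ^ 2 / (2 * m - 1) * J) := by linarith
      have h2 := le_of_mul_le_mul_left h1 hlam
      have h3 : A * J = m ^ 2 / (2 * m - 1) * J / R := by rw [hA]; ring
      rw [h3, le_div_iff₀ hR0]; linarith
    have iv' : Iv ≤ B * ∫ x in Ω, (u x + 1) ^ θ * (v x + 1) ^ (2 * n - 1) := by
      have e : ∫ x in Ω, σ * lam * (u x + 1) ^ θ * (v x + 1) ^ (2 * n - 1) =
          σ * lam * ∫ x in Ω, (u x + 1) ^ θ * (v x + 1) ^ (2 * n - 1) := by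
        rw [← integral_const_mul]; simp only [mul_assoc]
      rw [e] at iv
      set J := ∫ x in Ω, (u x + 1) ^ θ * (v x + 1) ^ (2 * n - 1)
      have h1 : lam * (R * Iv) ≤ lam * (σ * (n ^ 2 / (2 * n - 1)) * J) := by linarith
      have h2 := le_of_mul_le_mul_left h1 hlam
      have h3 : B * J = σ * (n ^ 2 / (2 * n - 1)) * J / R := by rw [hB]; ring
      rw [h3, le_div_iff₀ hR0]; linarith
    have hyoung : t * (μ * Iu + Iv) ≤ ∫ x in Ω, P x := by
      have h1 : t * (μ * Iu + Iv) ≤ t * (μ *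
          (A * ∫ x in Ω, (v x + 1) ^ p * (u x + 1) ^ (2 * m - 1)) +
          B * ∫ x in Ω, (u x + 1) ^ θ * (v x + 1) ^ (2 * n - 1)) := by gcongr
      refine h1.trans ?_
      have h2 : t * (μ *
          (A * ∫ x in Ω, (v x + 1) ^ p * (u x + 1) ^ (2 * m - 1)) +
          B * ∫ x in Ω, (u x + 1) ^ θ * (v x + 1) ^ (2 * n - 1)) =
          ∫ x in Ω, ((t * μ * A) * ((v x + 1) ^ p * (u x + 1) ^ (2 * m - 1)) +
            (t * B) * ((u x + 1) ^ θ * (v x + 1) ^ (2 * n - 1))) := by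
        rw [integral_add, integral_const_mul, integral_const_mul]
        · ring
        · exact (intOn S.hbd hJ1).const_mul _
        · exact (intOn S.hbd hJ2).const_mul _
      rw [h2]
      apply setIntegral_mono_on
      · exact ((intOn S.hbd hJ1).const_mul _).add ((intOn S.hbd hJ2).const_mul _)
      · exact intOn S.hbd hPc
      · exact hms
      · intro x hx
        have hU : 0 < u x + 1 := by linarith [S.hu x hx]
        have hV : 0 < v x + 1 := by linarith [S.hv x hx]
        have hy := hμ ((u x + 1) ^ (2 * m)) ((v x + 1) ^ (2 * n)) (by positivity) (by positivity)
        have hy2 := mul_le_mul_of_nonneg_left hy (hω0 x hx)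
        rw [← Real.rpow_mul hU.le, ← Real.rpow_mul hU.le, ← Real.rpow_mul hV.le,
          ← Real.rpow_mul hV.le] at hy2
        have hsκ : s * κ = (p + 1) / 2 := by rw [hκ]; field_simp
        have hακ : α * (p + 1) = θ + 1 := by rw [hα]; field_simp
        have c1 : (v x + 1) ^ p * (u x + 1) ^ (2 * m - 1) =
            ω x * ((u x + 1) ^ (2 * m * (1 - κ)) * (v x + 1) ^ (2 * n * κ)) := by
          have f1 : (v x + 1) ^ p = (v x + 1) ^ ((p - 1) / 2) * (v x + 1) ^ (2 * n * κ) := by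
            rw [← Real.rpow_add hV]; congr 1; rw [h2n, hsκ]; ring
          have f2 : (u x + 1) ^ (2 * m - 1) =
              (u x + 1) ^ ((θ - 1) / 2) * (u x + 1) ^ (2 * m * (1 - κ)) := by
            rw [← Real.rpow_add hU]; congr 1; rw [h2m]
            linear_combination α * hsκ + hακ / 2
          simp only [hω]
          rw [f1, f2]; ring
        have c2 : (u x + 1) ^ θ * (v x + 1) ^ (2 * n - 1) =
            ω x * ((v x + 1) ^ (2 * n * (1 - κ)) * (u x + 1) ^ (2 * m * κ)) := by
          have f1 : (v x + 1) ^ (2 * n - 1) =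
              (v x + 1) ^ ((p - 1) / 2) * (v x + 1) ^ (2 * n * (1 - κ)) := by
            rw [← Real.rpow_add hV]; congr 1; rw [h2n]
            linear_combination hsκ
          have f2 : (u x + 1) ^ θ =
              (u x + 1) ^ ((θ - 1) / 2) * (u x + 1) ^ (2 * m * κ) := by
            rw [← Real.rpow_add hU]; congr 1; rw [h2m]
            linear_combination -α * hsκ - hακ / 2
          simp only [hω]
          rw [f1, f2]; ring
        rw [c1, c2]
        simp only [hP]
        refine le_trans (le_of_eq ?_) hy2
        ring
    have hpt : (1 - η) * (∫ x in Ω, P x) ≤ (1 + ε) * (μ * Iu + Iv) + C' * volume.real Ω := by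
      have h2 : (1 + ε) * (μ * Iu + Iv) + C' * volume.real Ω =
          ∫ x in Ω, (((1 + ε) * μ) * (ω x * prim (gm m) (u x) ^ 2) +
            (1 + ε) * (ω x * prim (gm n) (v x) ^ 2) + C') := by
        rw [integral_add, integral_add, integral_const_mul, integral_const_mul]
        · simp only [integral_const, MeasurableSet.univ, measureReal_restrict_apply, univ_inter,
            smul_eq_mul]
          ring
        · exact (intOn S.hbd hpu).const_mul _
        · exact (intOn S.hbd hpv).const_mul _
        · exact ((intOn S.hbd hpu).const_mul _).add ((intOn S.hbd hpv).const_mul _)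
        · exact intOn S.hbd continuousOn_const
      rw [h2, ← integral_const_mul]
      apply setIntegral_mono_on
      · exact (intOn S.hbd hPc).const_mul _
      · exact (((intOn S.hbd hpu).const_mul _).add ((intOn S.hbd hpv).const_mul _)).add
          (intOn S.hbd continuousOn_const)
      · exact hms
      · intro x hx
        have hu := S.hu x hx
        have hv := S.hv x hx
        have h3 := sq_trunc hm1 hε0 hu.le
        have h4 := sq_trunc hn1 hε0 hv.le
        have h5 := hC' (u x + 1) (v x + 1) (by linarith) (by linarith)
        have h6 : μ * (u x + 1) ^ (2 * m) + (v x + 1) ^ (2 * n) ≤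
            (1 + ε) * (μ * prim (gm m) (u x) ^ 2 + prim (gm n) (v x) ^ 2) + K := by
          have := mul_le_mul_of_nonneg_left h3 hμ0.le
          rw [hK]; linarith
        have h7 := mul_le_mul_of_nonneg_left h6 (hω0 x hx)
        have h8 : ω x * K ≤ η * P x + C' := h5
        have h9 : P x = ω x * (μ * (u x + 1) ^ (2 * m) + (v x + 1) ^ (2 * n)) := rfl
        rw [← h9] at h7
        linarith
    set I := ∫ x in Ω, P x with hI
    have hfin : (1 + ε) * (μ * Iu + Iv) ≤ q * I := by
      have : q * I = (1 + ε) * (I / t) := by rw [hqd]; ring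
      rw [this]
      have h1 : μ * Iu + Iv ≤ I / t := by rw [le_div_iff₀ ht0]; linarith
      gcongr
    have hD2 : I ≤ D := by
      rw [hD, le_div_iff₀ hη0]
      have : q = 1 - 2 * η := by rw [hη]; ring
      rw [this] at hfin
      linarith
    exact hD2
  refine ⟨D / μ + D, by positivity, ?_⟩
  intro lam u v hlam S
  have h := key lam u v hlam S
  have hcu := fun e => contOn_rpow S.ho S.huc S.hu S.hub e
  have hcv := fun e => contOn_rpow S.ho S.hvc S.hv S.hvb e
  have hc1 : IntegrableOn (fun x => (v x + 1) ^ ((p - 1) / 2) * (u x + 1) ^ ((θ - 1) / 2) *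
      (u x + 1) ^ (α * s)) Ω := intOn S.hbd (((hcv ((p - 1) / 2)).mul (hcu ((θ - 1) / 2))).mul (hcu (α * s)))
  have hc2 : IntegrableOn (fun x => (v x + 1) ^ ((p - 1) / 2) * (u x + 1) ^ ((θ - 1) / 2) *
      (v x + 1) ^ s) Ω := intOn S.hbd (((hcv ((p - 1) / 2)).mul (hcu ((θ - 1) / 2))).mul (hcv s))
  rw [h2m, h2n] at h
  have e : ∫ x in Ω, (v x + 1) ^ ((p - 1) / 2) * (u x + 1) ^ ((θ - 1) / 2) *
        (μ * (u x + 1) ^ (α * s) + (v x + 1) ^ s) =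
      μ * (∫ x in Ω, (v x + 1) ^ ((p - 1) / 2) * (u x + 1) ^ ((θ - 1) / 2) *
        (u x + 1) ^ (α * s)) +
      ∫ x in Ω, (v x + 1) ^ ((p - 1) / 2) * (u x + 1) ^ ((θ - 1) / 2) * (v x + 1) ^ s := by
    rw [← integral_const_mul, ← integral_add (hc1.const_mul _) hc2]
    congr 1; funext x; ring
  rw [e] at h
  have p1 : 0 ≤ ∫ x in Ω, (v x + 1) ^ ((p - 1) / 2) * (u x + 1) ^ ((θ - 1) / 2) *
        (u x + 1) ^ (α * s) := setIntegral_nonneg S.ho.measurableSet fun x hx => by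
      have := S.hu x hx
      have := S.hv x hx
      positivity
  have p2 : 0 ≤ ∫ x in Ω, (v x + 1) ^ ((p - 1) / 2) * (u x + 1) ^ ((θ - 1) / 2) *
        (v x + 1) ^ s := setIntegral_nonneg S.ho.measurableSet fun x hx => by
      have := S.hu x hx
      have := S.hv x hx
      positivity
  have hDμ : 0 ≤ D / μ := by positivity
  constructor
  · have : ∫ x in Ω, (v x + 1) ^ ((p - 1) / 2) * (u x + 1) ^ ((θ - 1) / 2) *
        (u x + 1) ^ (α * s) ≤ D / μ := by rw [le_div_iff₀ hμ0]; linarith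
    linarith
  · have := mul_nonneg hμ0.le p1
    linarith

lemma primchi_contDiff : ContDiff ℝ 2 (prim chi) := by
  have h : ContDiff ℝ (1 + 1) (prim chi) := by
    rw [contDiff_succ_iff_deriv]
    refine ⟨fun t => (prim_hasDerivAt chi_continuous t).differentiableAt, fun h => ?_, ?_⟩
    · exact absurd h (by simp)
    · have : deriv (prim chi) = chi := funext fun t => (prim_hasDerivAt chi_continuous t).deriv
      rw [this]; exact chi_contDiff (n := 1)
  exact h.of_le (by norm_num)

lemma primchi_le {t : ℝ} (ht : 0 ≤ t) : prim chi t ≤ t := by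
  unfold prim
  have h := intervalIntegral.integral_mono_on ht (chi_continuous.intervalIntegrable (μ := volume) 0 t)
    (continuous_const.intervalIntegrable (μ := volume) 0 t) (fun x _ => chi_le_one x)
  simpa using h

lemma primchi_ge {t : ℝ} (ht : 0 ≤ t) : t - 2 ≤ prim chi t := by
  have hnn : ∀ t, 0 ≤ t → 0 ≤ prim chi t := fun t ht => prim_nonneg chi_nonneg ht
  rcases le_total t 2 with h | h
  · linarith [hnn t ht]
  · have hd : ∀ t ∈ Ici (2 : ℝ), HasDerivAt (fun t => prim chi t - t) 0 t := by
      intro t ht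
      rw [mem_Ici] at ht
      have h1 := (prim_hasDerivAt chi_continuous t).sub (hasDerivAt_id t)
      rw [chi_one ht, sub_self] at h1
      exact h1
    have hmon : MonotoneOn (fun t => prim chi t - t) (Ici 2) := by
      apply monotoneOn_of_deriv_nonneg (convex_Ici 2)
      · exact fun t ht => (hd t ht).continuousAt.continuousWithinAt
      · exact fun t ht => (hd t (interior_subset ht)).differentiableAt.differentiableWithinAt
      · exact fun t ht => (hd t (interior_subset ht)).deriv.ge
    have h2 := hmon (mem_Ici.2 le_rfl) (mem_Ici.2 h) h
    simp only at h2
    have h3 := hnn 2 (by norm_num)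
    linarith

lemma chi_deriv_nonneg (t : ℝ) : 0 ≤ deriv chi t := by
  apply Monotone.deriv_nonneg
  intro a b hab
  exact Real.smoothTransition.monotone (by linarith)

lemma ext0_lap {N : ℕ} {Ω : Set (EuclideanSpace ℝ (Fin N))} {p θ σ lam : ℝ}
    {u v : EuclideanSpace ℝ (Fin N) → ℝ} (S : Sol Ω p θ σ lam u v) (hσ : 0 < σ) (hlam : 0 < lam)
    {L : ℝ} (hL : lam ≤ L) (x : EuclideanSpace ℝ (Fin N)) :
    -lap (ext0 Ω (prim chi) v) x ≤ Ω.indicator (fun x => σ * L * (u x + 1) ^ θ) x := by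
  have hz : ∀ t < 1, prim chi t = 0 := prim_zero fun t ht => chi_zero ht
  by_cases hx : x ∈ Ω
  · rw [indicator_of_mem hx, lap_congr (ext0_of_mem S.ho hx)]
    have hva : ContDiffAt ℝ 2 v x := S.hv2.contDiffAt (S.ho.mem_nhds hx)
    have hdc : HasDerivAt chi (deriv chi (v x)) (v x) :=
      ((chi_contDiff (n := 1)).differentiable (by norm_num) (v x)).hasDerivAt
    rw [lap_comp hva (Filter.Eventually.of_forall fun t => prim_hasDerivAt chi_continuous t) hdc]
    have h1 := S.eqv x hx
    have hU : 0 < u x + 1 := by linarith [S.hu x hx]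
    have h2 : 0 ≤ deriv chi (v x) * ∑ i : Fin N, (pd i v x) ^ 2 :=
      mul_nonneg (chi_deriv_nonneg _) (Finset.sum_nonneg fun i _ => sq_nonneg _)
    have h3 : 0 ≤ σ * lam * (u x + 1) ^ θ := by positivity
    have h4 : chi (v x) * (σ * lam * (u x + 1) ^ θ) ≤ σ * lam * (u x + 1) ^ θ :=
      mul_le_of_le_one_left h3 (chi_le_one _)
    have h5 : σ * lam * (u x + 1) ^ θ ≤ σ * L * (u x + 1) ^ θ := by gcongr
    rw [← h1] at h4
    linarith
  · rw [indicator_of_notMem hx, lap_congr (ext0_of_notMem S.hvc S.hvb S.ho hz hx)]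
    simp [lap]

lemma final_algebra {c γ K1 K2 y : ℝ} (hc : 0 < c) (hγ0 : 0 ≤ γ) (hγ : γ < 1) (hK1 : 0 ≤ K1)
    (hy : 1 ≤ y) (h : c * y ≤ K1 + K2 * y ^ γ) :
    y ≤ ((K1 + K2) / c) ^ (1 / (1 - γ)) := by
  have hy0 : 0 < y := by linarith
  have hγ1 : 0 < 1 - γ := by linarith
  have h1 : 1 ≤ y ^ γ := Real.one_le_rpow hy hγ0
  have h2 : c * y ≤ (K1 + K2) * y ^ γ := by nlinarith
  have h3 : y = y ^ (1 - γ) * y ^ γ := by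
    rw [← Real.rpow_add hy0]; simp
  have h4 : c * y ^ (1 - γ) ≤ K1 + K2 := by
    have : c * y ^ (1 - γ) * y ^ γ ≤ (K1 + K2) * y ^ γ := by
      rw [mul_assoc, ← h3]; exact h2
    exact le_of_mul_le_mul_right this (by linarith)
  have h5 : y ^ (1 - γ) ≤ (K1 + K2) / c := by rw [le_div_iff₀ hc]; linarith
  have h6 := Real.rpow_le_rpow (by positivity) h5 (by positivity : 0 ≤ 1 / (1 - γ))
  rwa [← Real.rpow_mul hy0.le, mul_one_div_cancel hγ1.ne', Real.rpow_one] at h6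

lemma final_bound {N : ℕ} (Ω : Set (EuclideanSpace ℝ (Fin N))) {p θ σ s L : ℝ} (hp : 1 < p)
    (hpθ : p ≤ θ) (hσ : 0 < σ) (hL : 0 < L) (hs : p + 1 < s) (hq : qq p θ s < 0)
    (hdim : (N : ℝ) < 2 + 2 * ((θ + 1) / (p * θ - 1) * s)) : ∃ M : ℝ,
    ∀ (lam : ℝ) (u v : EuclideanSpace ℝ (Fin N) → ℝ), 0 < lam → lam ≤ L → Sol Ω p θ σ lam u v →
    ∀ x ∈ Ω, u x + v x ≤ M := by
  obtain ⟨C1, hC10, hC1⟩ := int_est Ω hp hpθ hσ hs hq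
  set α := (θ + 1) / (p + 1) with hα
  have hα1 : 1 ≤ α := by rw [hα, le_div_iff₀ (by linarith)]; linarith
  have hα0 : 0 < α := by linarith
  have hαp : α * (p + 1) = θ + 1 := by rw [hα]; field_simp
  have hθ1 : 1 < θ := by linarith
  have hpt : 0 < p * θ - 1 := by nlinarith
  have hs0 : 0 < s := by linarith
  set e := θ - α with he
  have hee : e * (p + 1) = p * θ - 1 := by rw [he]; linear_combination -hαp
  have he0 : 0 < e := by
    by_contra hcon
    nlinarith
  set mm := 1 + α * s / e with hmm
  have hmm2 : (θ + 1) / (p * θ - 1) * s = α * s / e := by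
    rw [← hee, ← hαp]; field_simp
  have hNmm : (N : ℝ) / 2 < mm := by rw [hmm, ← hmm2]; linarith
  have h1mm : 1 < mm := by
    have : 0 < α * s / e := by positivity
    linarith
  obtain ⟨r, hr1, hr2⟩ := exists_between (max_lt h1mm hNmm)
  have hr : 1 < r := lt_of_le_of_lt (le_max_left _ _) hr1
  have hrN : (N : ℝ) < 2 * r := by
    have := lt_of_le_of_lt (le_max_right _ _) hr1
    linarith
  have hr0 : 0 < r := by linarith
  obtain ⟨C, hC0, hC⟩ := linear_est (N := N) hr hrN
  set c := min 1 (σ / (2 * α)) with hc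
  have hc0 : 0 < c := lt_min one_pos (by positivity)
  have hc1 : c ≤ 1 := min_le_left _ _
  have hcσ : c * α < σ := by
    have h1 : c ≤ σ / (2 * α) := min_le_right _ _
    have h2 : c * α ≤ σ / (2 * α) * α := by gcongr
    have h3 : σ / (2 * α) * α = σ / 2 := by field_simp
    linarith
  set E := e + α * s with hE
  have hEm : E = e * mm := by rw [hE, hmm]; field_simp
  set δ := max 0 (θ * r - E) with hδ
  have hδ0 : 0 ≤ δ := le_max_left _ _
  have hδ1 : δ < α * r := by
    apply max_lt (by positivity)
    have : e * r < E := by rw [hEm]; gcongr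
    rw [he] at this
    linarith
  set γ := δ / α / r with hγ
  have hγ0 : 0 ≤ γ := by positivity
  have hγ1 : γ < 1 := by
    rw [hγ, div_div, div_lt_one (by positivity)]; exact hδ1
  set c' := c ^ ((p - 1) / 2) with hc'
  have hc'0 : 0 < c' := by positivity
  set C2 := C1 / c' with hC2
  have hC20 : 0 ≤ C2 := by positivity
  set K2 := C * (σ * L * C2 ^ (1 / r)) with hK2
  set K1 := 3 + C * C1 with hK1
  set Y := ((K1 + K2) / c) ^ (1 / (1 - γ)) with hY
  refine ⟨Y ^ (1 / α) + c * Y, ?_⟩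
  intro lam u v hlam hlL S x hx
  obtain ⟨hI1, hI2⟩ := hC1 lam u v hlam S
  have hcomp := comparison S hp hpθ hlam hc0 hc1 hcσ
  rw [← hα] at hcomp
  have hms := S.ho.measurableSet
  have hcu := fun e => contOn_rpow S.ho S.huc S.hu S.hub e
  have hcv := fun e => contOn_rpow S.ho S.hvc S.hv S.hvb e
  -- maximum of v
  obtain ⟨xm, hxm, hmax⟩ := S.hbd.isCompact_closure.exists_isMaxOn ⟨x, subset_closure hx⟩ S.hvc
  have hVM : ∀ y ∈ Ω, v y + 1 ≤ v xm + 1 := fun y hy => by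
    have : v y ≤ v xm := hmax (subset_closure hy)
    linarith
  set M := v xm + 1 with hM
  have hM1 : 1 ≤ M := by
    have := hVM x hx
    have := S.hv x hx
    linarith
  set y := M / c with hy
  have hy1 : 1 ≤ y := by rw [hy, le_div_iff₀ hc0]; linarith
  have hy0 : 0 < y := by linarith
  have hMy : M = c * y := by rw [hy]; field_simp
  have hUy : ∀ z ∈ Ω, u z + 1 ≤ y ^ (1 / α) := by
    intro z hz
    have hU : 0 < u z + 1 := by linarith [S.hu z hz]
    have h1 : (u z + 1) ^ α ≤ y := by
      rw [hy, le_div_iff₀ hc0]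
      have := hcomp z hz
      have := hVM z hz
      linarith
    have h2 := Real.rpow_le_rpow (by positivity) h1 (by positivity : 0 ≤ 1 / α)
    rwa [← Real.rpow_mul hU.le, mul_one_div_cancel hα0.ne', Real.rpow_one] at h2
  -- integral of U^E
  have hIE : ∫ z in Ω, (u z + 1) ^ E ≤ C2 := by
    rw [hC2, le_div_iff₀ hc'0, mul_comm, ← integral_const_mul]
    refine le_trans ?_ hI1
    apply setIntegral_mono_on
    · exact (intOn S.hbd (hcu E)).const_mul _
    · exact intOn S.hbd (((hcv _).mul (hcu _)).mul (hcu _))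
    · exact hms
    · intro z hz
      have hU : 0 < u z + 1 := by linarith [S.hu z hz]
      have h1 := Real.rpow_le_rpow (by positivity) (hcomp z hz) (by linarith : 0 ≤ (p - 1) / 2)
      rw [Real.mul_rpow hc0.le (by positivity), ← Real.rpow_mul hU.le] at h1
      have h2 : (u z + 1) ^ E = (u z + 1) ^ (α * ((p - 1) / 2)) * (u z + 1) ^ ((θ - 1) / 2) *
          (u z + 1) ^ (α * s) := by
        rw [← Real.rpow_add hU, ← Real.rpow_add hU]
        congr 1
        rw [hE, he]
        linear_combination -hαp / 2
      rw [h2]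
      have h3 : 0 ≤ (u z + 1) ^ ((θ - 1) / 2) * (u z + 1) ^ (α * s) := by positivity
      have h4 := mul_le_mul_of_nonneg_right h1 h3
      calc _ = c ^ ((p - 1) / 2) * (u z + 1) ^ (α * ((p - 1) / 2)) *
            ((u z + 1) ^ ((θ - 1) / 2) * (u z + 1) ^ (α * s)) := by rw [hc']; ring
        _ ≤ _ := h4
        _ = _ := by ring
  -- the right-hand side
  set f : EuclideanSpace ℝ (Fin N) → ℝ := Ω.indicator (fun x => σ * L * (u x + 1) ^ θ) with hf
  have hfm : Measurable f := by
    classical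
    rw [hf, ← Set.piecewise_eq_indicator]
    exact ((continuousOn_const.mul (hcu θ)).mono subset_closure).measurable_piecewise
      continuousOn_const hms
  have hf0 : ∀ z, 0 ≤ f z := by
    intro z
    apply indicator_nonneg
    intro z hz
    have hU : 0 < u z + 1 := by linarith [S.hu z hz]
    positivity
  have hfr : (fun z => f z ^ r) = Ω.indicator (fun z => (σ * L) ^ r * (u z + 1) ^ (θ * r)) := by
    funext z
    by_cases hz : z ∈ Ω
    · have hU : 0 < u z + 1 := by linarith [S.hu z hz]
      rw [hf, indicator_of_mem hz, indicator_of_mem hz, Real.mul_rpow (by positivity)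
        (by positivity), ← Real.rpow_mul hU.le]
    · rw [hf, indicator_of_notMem hz, indicator_of_notMem hz, Real.zero_rpow hr0.ne']
  have hfint : Integrable (fun z => f z ^ r) := by
    rw [hfr, integrable_indicator_iff hms]
    exact (intOn S.hbd (hcu _)).const_mul _
  have hfval : (∫ z, f z ^ r) ^ (1 / r) ≤ σ * L * C2 ^ (1 / r) * y ^ γ := by
    have h1 : ∫ z, f z ^ r ≤ (σ * L) ^ r * C2 * y ^ (δ / α) := by
      rw [hfr, integral_indicator hms, integral_const_mul, mul_assoc]
      apply mul_le_mul_of_nonneg_left _ (by positivity)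
      have h2 : ∫ z in Ω, (u z + 1) ^ (θ * r) ≤ ∫ z in Ω, (u z + 1) ^ E * y ^ (δ / α) := by
        apply setIntegral_mono_on
        · exact intOn S.hbd (hcu _)
        · exact (intOn S.hbd (hcu _)).mul_const _
        · exact hms
        · intro z hz
          have hU1 : 1 ≤ u z + 1 := by linarith [S.hu z hz]
          have hU : 0 < u z + 1 := by linarith
          have h3 : (u z + 1) ^ (θ * r) ≤ (u z + 1) ^ (E + δ) := by
            apply Real.rpow_le_rpow_of_exponent_le hU1
            have := le_max_right 0 (θ * r - E)
            linarith
          rw [Real.rpow_add hU] at h3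
          refine h3.trans ?_
          gcongr
          have h4 := Real.rpow_le_rpow hU.le (hUy z hz) hδ0
          rw [← Real.rpow_mul hy0.le] at h4
          have : 1 / α * δ = δ / α := by ring
          rwa [this] at h4
      rw [integral_mul_const] at h2
      refine h2.trans ?_
      gcongr
    have h5 := Real.rpow_le_rpow
      (integral_nonneg fun z => Real.rpow_nonneg (hf0 z) r) h1 (by positivity : 0 ≤ 1 / r)
    refine h5.trans (le_of_eq ?_)
    rw [Real.mul_rpow (by positivity) (by positivity), Real.mul_rpow (by positivity) hC20,
      ← Real.rpow_mul (by positivity), ← Real.rpow_mul hy0.le, mul_one_div_cancel hr0.ne',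
      Real.rpow_one, hγ, mul_one_div]
  -- the truncated function
  have hz : ∀ t < 1, prim chi t = 0 := prim_zero fun t ht => chi_zero ht
  set W := ext0 Ω (prim chi) v with hW
  have hW2 : ContDiff ℝ 2 W := ext0_contDiff S.hvc S.hvb S.ho hz primchi_contDiff S.hv2
  have hWc : HasCompactSupport W := ext0_compact S.hbd
  have hW0 : ∀ z, 0 ≤ W z := by
    intro z
    apply indicator_nonneg
    intro z hz
    exact prim_nonneg chi_nonneg (S.hv z hz).le
  have hlapW : ∀ z, -lap W z ≤ f z := fun z => ext0_lap S hσ hlam hlL z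
  have hWint : ∫ z, W z ≤ C1 := by
    rw [hW]
    unfold ext0
    rw [integral_indicator hms]
    refine le_trans ?_ hI2
    apply setIntegral_mono_on
    · exact intOn S.hbd ((prim_contDiff chi_continuous).continuous.comp_continuousOn S.hvc)
    · exact intOn S.hbd (((hcv _).mul (hcu _)).mul (hcv _))
    · exact hms
    · intro z hz
      have hv := S.hv z hz
      have hu := S.hu z hz
      have h1 := primchi_le hv.le
      have hV1 : 1 ≤ v z + 1 := by linarith
      have hU1 : 1 ≤ u z + 1 := by linarith
      have h2 : 1 ≤ (v z + 1) ^ ((p - 1) / 2) := Real.one_le_rpow hV1 (by linarith)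
      have h3 : 1 ≤ (u z + 1) ^ ((θ - 1) / 2) := Real.one_le_rpow hU1 (by linarith)
      have h4 : v z + 1 ≤ (v z + 1) ^ s := by
        conv_lhs => rw [← Real.rpow_one (v z + 1)]
        exact Real.rpow_le_rpow_of_exponent_le hV1 (by linarith)
      have h5 : 1 ≤ (v z + 1) ^ ((p - 1) / 2) * (u z + 1) ^ ((θ - 1) / 2) :=
        one_le_mul_of_one_le_of_one_le h2 h3
      have h6 : 0 ≤ (v z + 1) ^ s := by positivity
      have h7 := le_mul_of_one_le_left h6 h5
      linarith
  have hWle := hC W f hW2 hWc hW0 hfm hf0 hfint hlapW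
  have hMle : c * y ≤ K1 + K2 * y ^ γ := by
    rw [← hMy]
    have hyg : 0 ≤ y ^ γ := by positivity
    have hK2y : 0 ≤ K2 * y ^ γ := by positivity
    have hCC : 0 ≤ C * C1 := by positivity
    by_cases hxmΩ : xm ∈ Ω
    · have h1 := hWle xm
      have h2 : W xm = prim chi (v xm) := by rw [hW]; simp [ext0, hxmΩ]
      have h3 := primchi_ge (S.hv xm hxmΩ).le
      have h4 : C * ((∫ z, W z) + (∫ z, f z ^ r) ^ (1 / r)) ≤
          C * (C1 + σ * L * C2 ^ (1 / r) * y ^ γ) := by gcongr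
      have h5 : C * (C1 + σ * L * C2 ^ (1 / r) * y ^ γ) = C * C1 + K2 * y ^ γ := by
        rw [hK2]; ring
      rw [hK1, hM]
      linarith
    · have hfr2 : xm ∈ frontier Ω := by rw [S.ho.frontier_eq]; exact ⟨hxm, hxmΩ⟩
      have := S.hvb xm hfr2
      rw [hK1, hM]
      linarith
  have hyY : y ≤ Y := final_algebra hc0 hγ0 hγ1 (by positivity) hy1 hMle
  have h1 := hUy x hx
  have h2 := hVM x hx
  rw [hMy] at h2
  have h3 : y ^ (1 / α) ≤ Y ^ (1 / α) := Real.rpow_le_rpow hy0.le hyY (by positivity)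
  have h4 : c * y ≤ c * Y := by gcongr
  linarith

/-- uniform boundedness of the minimal solutions (hence boundedness of the
extremal solution) when `N < 2 + 2x₀`, `x₀` the largest root of `H`. -/
theorem stmt0 {N : ℕ} (hN : 1 ≤ N) (Ω : Set (EuclideanSpace ℝ (Fin N)))
    (hΩo : IsOpen Ω) (hΩb : Bornology.IsBounded Ω) (hΩs : HasSmoothBoundary Ω)
    (p θ σ lamStar x₀ : ℝ) (hp : 1 < p) (hpθ : p ≤ θ) (hσ : 0 < σ) (hls : 0 < lamStar)
    (u v : ℝ → EuclideanSpace ℝ (Fin N) → ℝ)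
    (hreg : ∀ lam ∈ Set.Ioo (lamStar / 2) lamStar,
      ContDiffOn ℝ 2 (u lam) Ω ∧ ContDiffOn ℝ 2 (v lam) Ω ∧
      ContinuousOn (u lam) (closure Ω) ∧ ContinuousOn (v lam) (closure Ω))
    (hpos : ∀ lam ∈ Set.Ioo (lamStar / 2) lamStar, ∀ x ∈ Ω, 0 < u lam x ∧ 0 < v lam x)
    (hbdry : ∀ lam ∈ Set.Ioo (lamStar / 2) lamStar, ∀ x ∈ frontier Ω,
      u lam x = 0 ∧ v lam x = 0)
    (heq : ∀ lam ∈ Set.Ioo (lamStar / 2) lamStar, ∀ x ∈ Ω,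
      -lap (u lam) x = lam * (v lam x + 1) ^ p ∧
      -lap (v lam) x = σ * lam * (u lam x + 1) ^ θ)
    (hstab : ∀ lam ∈ Set.Ioo (lamStar / 2) lamStar,
      IsStable Ω lam (σ * lam) p θ (u lam) (v lam))
    (hmono : ∀ x ∈ Ω,
      MonotoneOn (fun lam => u lam x) (Set.Ioo (lamStar / 2) lamStar) ∧
      MonotoneOn (fun lam => v lam x) (Set.Ioo (lamStar / 2) lamStar))
    (hx₀root : Hpoly p θ x₀ = 0) (hx₀max : ∀ x : ℝ, x₀ < x → Hpoly p θ x ≠ 0)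
    (hdim : (N : ℝ) < 2 + 2 * x₀) :
    ∃ M : ℝ, ∀ lam ∈ Set.Ioo (lamStar / 2) lamStar, ∀ x ∈ Ω,
      u lam x + v lam x ≤ M := by
  obtain ⟨s, hs, hq, hd⟩ := exists_s N p θ x₀ hp hpθ hx₀root hx₀max hdim
  obtain ⟨M, hM⟩ := final_bound Ω hp hpθ hσ hls hs hq hd
  refine ⟨M, fun lam hlam => ?_⟩
  obtain ⟨h1, h2, h3, h4⟩ := hreg lam hlam
  exact hM lam (u lam) (v lam) (by linarith [hlam.1]) hlam.2.le
    ⟨hΩo, hΩb, h1, h2, h3, h4, fun x hx => (hpos lam hlam x hx).1,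
      fun x hx => (hpos lam hlam x hx).2,
      fun x hx => (hbdry lam hlam x hx).1, fun x hx => (hbdry lam hlam x hx).2,
      fun x hx => (heq lam hlam x hx).1, fun x hx => (heq lam hlam x hx).2, hstab lam hlam⟩
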